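/- (Symmetry for co-NSOP_1 types) Let p(x) be a co-NSOP_1 partial type over M and let a be a tuple of realizations of p. If a ⫝^{Kd}_M b, then b ⫝^{Kd}_M a. -/

import Mathlib

namespace NSOP3Paper

open FirstOrder Language

universe u v w w' w₂ x y z

/-- Consistency (equivalently, by compactness over the monster model, finite
satisfiability) of a family of conditions on tuples. -/
def FamConsistent {ι : Type*} {X : Type*} (C : ι → X → Prop) : Prop :=
  ∀ s : Finset ι, ∃ xx : X, ∀ i ∈ s, C i xx

/-- `k`-inconsistency of a family of conditions: any `k` of them (with pairwise
distinct indices) are jointly unsatisfiable. -/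
def FamKInconsistent {ι : Type*} {X : Type*} (k : ℕ) (C : ι → X → Prop) : Prop :=
  ∀ s : Finset ι, s.card = k → ¬∃ xx : X, ∀ i ∈ s, C i xx

/-- Flattening of a family of tuples into a single tuple. -/
def flat {𝕄 : Type w} {ι : Type*} {β : Type*} (a : ι → β → 𝕄) : ι × β → 𝕄 :=
  fun q => a q.1 q.2

/-- A first-order `L`-formula in free variables `α`, together with a tuple of
parameters from `𝕄`; this represents an instance `φ(x̄, b̄)`. -/
structure ParamFormula (L : FirstOrder.Language.{u, v}) (𝕄 : Type w) [L.Structure 𝕄]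
    (α : Type w') where
  Params : Type
  toFormula : L.Formula (α ⊕ Params)
  params : Params → 𝕄

namespace ParamFormula

variable {L : FirstOrder.Language.{u, v}} {𝕄 : Type w} [L.Structure 𝕄] {α : Type w'}

/-- Realization of `φ(x̄, b̄)` at a tuple from `𝕄`. -/
def Realize (φ : ParamFormula L 𝕄 α) (xx : α → 𝕄) : Prop :=
  φ.toFormula.Realize (Sum.elim xx φ.params)

/-- All parameters of `φ` lie in `A`; i.e. `φ ∈ L(A)`. -/
def ParamsIn (φ : ParamFormula L 𝕄 α) (A : Set 𝕄) : Prop :=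
  ∀ i, φ.params i ∈ A

/-- Negation of a formula with parameters. -/
protected def not (φ : ParamFormula L 𝕄 α) : ParamFormula L 𝕄 α :=
  ⟨φ.Params, BoundedFormula.not φ.toFormula, φ.params⟩

/-- Substitute a tuple of elements of `𝕄` for the second group of free variables,
obtaining the instance `φ(x̄, c̄)` as a formula with parameters. -/
def subst {γ : Type} (φ : ParamFormula L 𝕄 (α ⊕ γ)) (c : γ → 𝕄) : ParamFormula L 𝕄 α :=
  ⟨γ ⊕ φ.Params,
    (φ.toFormula).relabel (Sum.elim (Sum.map id Sum.inl) (Sum.inr ∘ Sum.inr)),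
    Sum.elim c φ.params⟩

end ParamFormula

section TypesDefs

variable (L : FirstOrder.Language.{u, v}) (𝕄 : Type w) [L.Structure 𝕄]

/-- Two tuples have the same type over the parameter set `A` (written `b ≡_A b'`). -/
def TpEq (A : Set 𝕄) {β : Type w'} (b b' : β → 𝕄) : Prop :=
  ∀ φ : ParamFormula L 𝕄 β, φ.ParamsIn A → (φ.Realize b ↔ φ.Realize b')

/-- A complete global type in variables `α`: a complete, consistent set of formulas
with parameters from the monster model `𝕄`. -/
structure GlobalType (α : Type w') where
  Mem : ParamFormula L 𝕄 α → Prop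
  consistent : ∀ S : Finset (ParamFormula L 𝕄 α), (∀ φ ∈ S, Mem φ) →
    ∃ xx : α → 𝕄, ∀ φ ∈ S, φ.Realize xx
  complete : ∀ φ : ParamFormula L 𝕄 α, Mem φ ∨ Mem φ.not

/-- A sequence of tuples is indiscernible over the parameter set `A`: any two finite
increasing subtuples of the same length have the same type over `A`. -/
def IndiscernibleOver (A : Set 𝕄) {β : Type w'} (b : ℕ → β → 𝕄) : Prop :=
  ∀ (n : ℕ) (f g : Fin n → ℕ), StrictMono f → StrictMono g →
    TpEq L 𝕄 A (fun q : Fin n × β => b (f q.1) q.2) (fun q : Fin n × β => b (g q.1) q.2)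

end TypesDefs

namespace GlobalType

variable {L : FirstOrder.Language.{u, v}} {𝕄 : Type w} [L.Structure 𝕄] {α : Type w'}

/-- A global type is invariant over `A` if membership of `φ(x̄, b̄)` depends only on
the type of `b̄` over `A`. -/
def InvariantOver (p : GlobalType L 𝕄 α) (A : Set 𝕄) : Prop :=
  ∀ (P : Type) (ψ : L.Formula (α ⊕ P)) (b b' : P → 𝕄),
    TpEq L 𝕄 A b b' → (p.Mem ⟨P, ψ, b⟩ ↔ p.Mem ⟨P, ψ, b'⟩)

/-- A global type is finitely satisfiable in `A` if each of its formulas is satisfied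
by a tuple from `A`. -/
def FinSatIn (p : GlobalType L 𝕄 α) (A : Set 𝕄) : Prop :=
  ∀ φ : ParamFormula L 𝕄 α, p.Mem φ → ∃ xx : α → 𝕄, (∀ i, xx i ∈ A) ∧ φ.Realize xx

/-- `a ⊨ p|_B` : the tuple `a` realizes the restriction of the global type `p` to the
parameter set `B`. -/
def RealizesOver (p : GlobalType L 𝕄 α) (B : Set 𝕄) (a : α → 𝕄) : Prop :=
  ∀ φ : ParamFormula L 𝕄 α, p.Mem φ → φ.ParamsIn B → φ.Realize a

/-- `(b i)` is a Morley sequence in `p` over `A`: each `b i ⊨ p|_{A b_{<i}}`. -/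
def IsMorleyOver (p : GlobalType L 𝕄 α) (A : Set 𝕄) (b : ℕ → α → 𝕄) : Prop :=
  ∀ i : ℕ, p.RealizesOver (A ∪ ⋃ j ∈ Set.Iio i, Set.range (b j)) (b i)

end GlobalType

section MorleyDefs

variable (L : FirstOrder.Language.{u, v}) (𝕄 : Type w) [L.Structure 𝕄]

/-- `(b i)` is an invariant Morley sequence over `A`: a Morley sequence in some global
type invariant over `A`. -/
def IsInvMorleyOver (A : Set 𝕄) {α : Type w'} (b : ℕ → α → 𝕄) : Prop :=
  ∃ p : GlobalType L 𝕄 α, p.InvariantOver A ∧ p.IsMorleyOver A b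

/-- `(b i)` is a coheir Morley sequence over `A`: a Morley sequence in some global
type finitely satisfiable in `A`. -/
def IsCoheirMorleyOver (A : Set 𝕄) {α : Type w'} (b : ℕ → α → 𝕄) : Prop :=
  ∃ p : GlobalType L 𝕄 α, p.FinSatIn A ∧ p.IsMorleyOver A b

end MorleyDefs

namespace ParamFormula

variable {L : FirstOrder.Language.{u, v}} {𝕄 : Type w} [L.Structure 𝕄] {α : Type w'}

/-- `φ(x̄, b̄)` Kim-divides over `A`: some invariant Morley sequence over `A` starting
with `b̄` makes the corresponding instances inconsistent. -/
def KimDividesOver (φ : ParamFormula L 𝕄 α) (A : Set 𝕄) : Prop :=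
  ∃ b : ℕ → φ.Params → 𝕄, b 0 = φ.params ∧ IsInvMorleyOver L 𝕄 A b ∧
    ¬FamConsistent fun (i : ℕ) (xx : α → 𝕄) => φ.toFormula.Realize (Sum.elim xx (b i))

/-- `φ(x̄, b̄)` Conant-divides over `A`: every invariant Morley sequence over `A`
starting with `b̄` makes the corresponding instances inconsistent. -/
def ConantDividesOver (φ : ParamFormula L 𝕄 α) (A : Set 𝕄) : Prop :=
  ∀ b : ℕ → φ.Params → 𝕄, b 0 = φ.params → IsInvMorleyOver L 𝕄 A b →
    ¬FamConsistent fun (i : ℕ) (xx : α → 𝕄) => φ.toFormula.Realize (Sum.elim xx (b i))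

/-- `φ(x̄, b̄)` divides over `A`: some `A`-indiscernible sequence starting with `b̄`
makes the corresponding instances inconsistent. -/
def DividesOver (φ : ParamFormula L 𝕄 α) (A : Set 𝕄) : Prop :=
  ∃ b : ℕ → φ.Params → 𝕄, b 0 = φ.params ∧ IndiscernibleOver L 𝕄 A b ∧
    ¬FamConsistent fun (i : ℕ) (xx : α → 𝕄) => φ.toFormula.Realize (Sum.elim xx (b i))

/-- `φ` Kim-forks over `A`: it implies a finite disjunction of formulas Kim-dividing
over `A`. -/
def KimForksOver (φ : ParamFormula L 𝕄 α) (A : Set 𝕄) : Prop :=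
  ∃ (k : ℕ) (ψ : Fin k → ParamFormula L 𝕄 α), (∀ j, (ψ j).KimDividesOver A) ∧
    ∀ xx : α → 𝕄, φ.Realize xx → ∃ j, (ψ j).Realize xx

/-- `φ` Conant-forks over `A`: it implies a finite disjunction of formulas
Conant-dividing over `A`. -/
def ConantForksOver (φ : ParamFormula L 𝕄 α) (A : Set 𝕄) : Prop :=
  ∃ (k : ℕ) (ψ : Fin k → ParamFormula L 𝕄 α), (∀ j, (ψ j).ConantDividesOver A) ∧
    ∀ xx : α → 𝕄, φ.Realize xx → ∃ j, (ψ j).Realize xx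

/-- `φ` forks over `A`: it implies a finite disjunction of formulas dividing over `A`. -/
def ForksOver (φ : ParamFormula L 𝕄 α) (A : Set 𝕄) : Prop :=
  ∃ (k : ℕ) (ψ : Fin k → ParamFormula L 𝕄 α), (∀ j, (ψ j).DividesOver A) ∧
    ∀ xx : α → 𝕄, φ.Realize xx → ∃ j, (ψ j).Realize xx

end ParamFormula

section IndDefs

variable (L : FirstOrder.Language.{u, v}) (𝕄 : Type w) [L.Structure 𝕄]

/-- `a ⫝^K_A B` : `tp(a/A ∪ B)` contains no formula Kim-forking over `A`. -/
def IndKim (A B : Set 𝕄) {γ : Type w'} (a : γ → 𝕄) : Prop :=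
  ∀ φ : ParamFormula L 𝕄 γ, φ.ParamsIn (A ∪ B) → φ.Realize a → ¬φ.KimForksOver A

/-- `a ⫝^{Kd}_A B` : `tp(a/A ∪ B)` contains no formula Kim-dividing over `A`. -/
def IndKd (A B : Set 𝕄) {γ : Type w'} (a : γ → 𝕄) : Prop :=
  ∀ φ : ParamFormula L 𝕄 γ, φ.ParamsIn (A ∪ B) → φ.Realize a → ¬φ.KimDividesOver A

/-- `a ⫝^{K*}_A B` : Conant-independence. -/
def IndConant (A B : Set 𝕄) {γ : Type w'} (a : γ → 𝕄) : Prop :=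
  ∀ φ : ParamFormula L 𝕄 γ, φ.ParamsIn (A ∪ B) → φ.Realize a → ¬φ.ConantForksOver A

/-- `a ⫝^{K*d}_A B` : Conant-dividing independence. -/
def IndConantD (A B : Set 𝕄) {γ : Type w'} (a : γ → 𝕄) : Prop :=
  ∀ φ : ParamFormula L 𝕄 γ, φ.ParamsIn (A ∪ B) → φ.Realize a → ¬φ.ConantDividesOver A

/-- `a ⫝^f_A B` : forking-independence. -/
def IndForking (A B : Set 𝕄) {γ : Type w'} (a : γ → 𝕄) : Prop :=
  ∀ φ : ParamFormula L 𝕄 γ, φ.ParamsIn (A ∪ B) → φ.Realize a → ¬φ.ForksOver A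

/-- `a ⫝^i_A B` : `tp(a/A ∪ B)` extends to a global type invariant over `A`. -/
def IndInv (A B : Set 𝕄) {γ : Type w'} (a : γ → 𝕄) : Prop :=
  ∃ p : GlobalType L 𝕄 γ, p.InvariantOver A ∧
    ∀ φ : ParamFormula L 𝕄 γ, φ.ParamsIn (A ∪ B) → φ.Realize a → p.Mem φ

/-- `a ⫝^u_A B` : `tp(a/A ∪ B)` extends to a global type finitely satisfiable in `A`. -/
def IndFinSat (A B : Set 𝕄) {γ : Type w'} (a : γ → 𝕄) : Prop :=
  ∃ p : GlobalType L 𝕄 γ, p.FinSatIn A ∧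
    ∀ φ : ParamFormula L 𝕄 γ, φ.ParamsIn (A ∪ B) → φ.Realize a → p.Mem φ

/-- `a ⫝^{K+}_A b` : there is an invariant Morley sequence over `A` starting with `b`
that is indiscernible over `A ∪ a`. -/
def IndKPlus (A : Set 𝕄) {δ : Type w'} {γ : Type w₂} (b : δ → 𝕄) (a : γ → 𝕄) : Prop :=
  ∃ bs : ℕ → δ → 𝕄, bs 0 = b ∧ IsInvMorleyOver L 𝕄 A bs ∧
    IndiscernibleOver L 𝕄 (A ∪ Set.range a) bs

/-- `a ⫝^{K+u}_A b` : there is a coheir Morley sequence over `A` starting with `b`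
that is indiscernible over `A ∪ a`. -/
def IndKPlusU (A : Set 𝕄) {δ : Type w'} {γ : Type w₂} (b : δ → 𝕄) (a : γ → 𝕄) : Prop :=
  ∃ bs : ℕ → δ → 𝕄, bs 0 = b ∧ IsCoheirMorleyOver L 𝕄 A bs ∧
    IndiscernibleOver L 𝕄 (A ∪ Set.range a) bs

/-- Conant-independence `⫝^{K*}` is symmetric (over every small model). -/
def ConantSymmetric : Prop :=
  ∀ (M : L.ElementarySubstructure 𝕄) (γ δ : Type w) (a : γ → 𝕄) (b : δ → 𝕄),
    IndConant L 𝕄 (M : Set 𝕄) (Set.range b) a → IndConant L 𝕄 (M : Set 𝕄) (Set.range a) b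

/-- Conant-dividing independence `⫝^{K*d}` is symmetric. -/
def ConantDSymmetric : Prop :=
  ∀ (M : L.ElementarySubstructure 𝕄) (γ δ : Type w) (a : γ → 𝕄) (b : δ → 𝕄),
    IndConantD L 𝕄 (M : Set 𝕄) (Set.range b) a → IndConantD L 𝕄 (M : Set 𝕄) (Set.range a) b

/-- The relation `⫝^{K+}` is symmetric. -/
def KPlusSymmetric : Prop :=
  ∀ (M : L.ElementarySubstructure 𝕄) (γ δ : Type w) (a : γ → 𝕄) (b : δ → 𝕄),
    IndKPlus L 𝕄 (M : Set 𝕄) b a → IndKPlus L 𝕄 (M : Set 𝕄) a b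

/-- Forking-independence satisfies the chain condition with respect to invariant
Morley sequences. -/
def ChainConditionF : Prop :=
  ∀ (M : L.ElementarySubstructure 𝕄) (γ δ : Type w) (a : γ → 𝕄) (bs : ℕ → δ → 𝕄),
    IsInvMorleyOver L 𝕄 (M : Set 𝕄) bs →
    IndForking L 𝕄 (M : Set 𝕄) (Set.range (bs 0)) a →
    ∃ bs' : ℕ → δ → 𝕄,
      TpEq L 𝕄 ((M : Set 𝕄) ∪ Set.range (bs 0)) (flat bs') (flat bs) ∧
      IndiscernibleOver L 𝕄 ((M : Set 𝕄) ∪ Set.range a) bs' ∧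
      IndForking L 𝕄 (M : Set 𝕄) (Set.range (flat bs')) a

/-- Kim-independence satisfies the chain condition with respect to invariant Morley
sequences. -/
def ChainConditionK : Prop :=
  ∀ (M : L.ElementarySubstructure 𝕄) (γ δ : Type w) (a : γ → 𝕄) (bs : ℕ → δ → 𝕄),
    IsInvMorleyOver L 𝕄 (M : Set 𝕄) bs →
    IndKim L 𝕄 (M : Set 𝕄) (Set.range (bs 0)) a →
    ∃ bs' : ℕ → δ → 𝕄,
      TpEq L 𝕄 ((M : Set 𝕄) ∪ Set.range (bs 0)) (flat bs') (flat bs) ∧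
      IndiscernibleOver L 𝕄 ((M : Set 𝕄) ∪ Set.range a) bs' ∧
      IndKim L 𝕄 (M : Set 𝕄) (Set.range (flat bs')) a

/-- `T` is NSOP₃: there is no definable binary relation on tuples with no 3-cycles
containing an infinite chain. -/
def IsNSOP3 : Prop :=
  ¬∃ (m : ℕ) (R : ParamFormula L 𝕄 (Fin m ⊕ Fin m)) (a : ℕ → Fin m → 𝕄),
    (∀ i j : ℕ, i < j → R.Realize (Sum.elim (a i) (a j))) ∧
    ¬∃ x1 x2 x3 : Fin m → 𝕄,
      R.Realize (Sum.elim x1 x2) ∧ R.Realize (Sum.elim x2 x3) ∧ R.Realize (Sum.elim x3 x1)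

/-- `𝕄` is a `κ`-monster: every consistent type in fewer than `κ` variables over a
parameter set of size less than `κ` is realized. -/
class IsMonster (κ : Cardinal.{w}) : Prop where
  saturated : ∀ {α : Type w} (A : Set 𝕄) (S : Set (ParamFormula L 𝕄 α)),
    Cardinal.mk α < κ → Cardinal.mk A < κ → (∀ φ ∈ S, φ.ParamsIn A) →
    (∀ S₀ : Finset (ParamFormula L 𝕄 α), (∀ φ ∈ S₀, φ ∈ S) →
      ∃ xx : α → 𝕄, ∀ φ ∈ S₀, φ.Realize xx) →
    ∃ xx : α → 𝕄, ∀ φ ∈ S, φ.Realize xx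

/-- A tuple realizes the partial type `P`. -/
def RealizesPType {nv : ℕ} (P : Set (ParamFormula L 𝕄 (Fin nv))) (a : Fin nv → 𝕄) : Prop :=
  ∀ φ ∈ P, φ.Realize a

/-- `p(x̄)` is co-NSOP₁: no `L(M)`-formula `φ(x̄, ȳ)` and tree of tuples of
realizations of `p` witness SOP₁-style consistency/inconsistency. -/
def CoNSOP1 (M : Set 𝕄) {nv : ℕ} (P : Set (ParamFormula L 𝕄 (Fin nv))) : Prop :=
  ¬∃ (k m : ℕ) (φ : ParamFormula L 𝕄 (Fin k ⊕ (Fin m × Fin nv)))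
      (b : List Bool → Fin m → Fin nv → 𝕄),
    φ.ParamsIn M ∧
    (∀ η j, RealizesPType L 𝕄 P (b η j)) ∧
    (∀ σ : ℕ → Bool, FamConsistent fun (n : ℕ) (xx : Fin k → 𝕄) =>
      (φ.subst (flat (b (List.ofFn fun i : Fin n => σ i)))).Realize xx) ∧
    (∀ η₁ η₂ : List Bool, (η₁ ++ [false]) <+: η₂ →
      ¬∃ xx : Fin k → 𝕄, (φ.subst (flat (b η₂))).Realize xx ∧
        (φ.subst (flat (b (η₁ ++ [true])))).Realize xx)

/-- The set of realizations of the partial type `P`. -/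
def PRealizations {nv : ℕ} (P : Set (ParamFormula L 𝕄 (Fin nv))) : Type w :=
  { a : Fin nv → 𝕄 // RealizesPType L 𝕄 P a }

/-- The language `L_p` associated to a partial `nv`-type: an `m`-ary relation symbol
for each `L(M)`-formula in `m` groups of `nv` variables. -/
def pLang (M : Set 𝕄) (nv : ℕ) : Language :=
  ⟨fun _ => Empty, fun m => { φ : ParamFormula L 𝕄 (Fin m × Fin nv) // φ.ParamsIn M }⟩

/-- The structure `M_p` on the set of realizations of `p`, with relations interpreted
by the corresponding formulas in `𝕄`. -/
instance pStruct (M : Set 𝕄) {nv : ℕ} (P : Set (ParamFormula L 𝕄 (Fin nv))) :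
    (pLang L 𝕄 M nv).Structure (PRealizations L 𝕄 P) where
  funMap := fun {n} f _ => f.elim
  RelMap := fun {m} R xs => R.1.Realize fun q : Fin m × Fin nv => (xs q.1).1 q.2

end IndDefs

/-- An SOP₁ pattern witnessed inside the structure `W`. -/
def SOP1PatternIn (L' : FirstOrder.Language.{x, y}) (W : Type z) [L'.Structure W] : Prop :=
  ∃ (k n : ℕ) (φ : L'.Formula (Fin k ⊕ Fin n)) (bt : List Bool → Fin n → W),
    (∀ σ : ℕ → Bool, FamConsistent fun (i : ℕ) (xx : Fin k → W) =>
      φ.Realize (Sum.elim xx (bt (List.ofFn fun j : Fin i => σ j)))) ∧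
    (∀ η₁ η₂ : List Bool, (η₁ ++ [false]) <+: η₂ →
      ¬∃ xx : Fin k → W, φ.Realize (Sum.elim xx (bt η₂)) ∧
        φ.Realize (Sum.elim xx (bt (η₁ ++ [true]))))

/-- The complete theory of `N` is NSOP₁: no SOP₁ pattern in any elementarily
equivalent structure. -/
def IsNSOP1Th (L' : FirstOrder.Language.{x, y}) (N : Type z) [L'.Structure N] : Prop :=
  ¬∃ (W : Type (max x y z)) (S : L'.Structure W),
    L'.completeTheory N = @Language.completeTheory L' W S ∧ @SOP1PatternIn L' W S

/-- The formula `φ(x̄, ȳ)` has the tree property, witnessed in `W`. -/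
def FormulaTPIn (L' : FirstOrder.Language.{x, y}) (W : Type z) [L'.Structure W]
    {k n : ℕ} (φ : L'.Formula (Fin k ⊕ Fin n)) : Prop :=
  ∃ (kk : ℕ) (bt : List ℕ → Fin n → W),
    (∀ σ : ℕ → ℕ, FamConsistent fun (i : ℕ) (xx : Fin k → W) =>
      φ.Realize (Sum.elim xx (bt (List.ofFn fun j : Fin i => σ j)))) ∧
    (∀ η : List ℕ, FamKInconsistent kk fun (j : ℕ) (xx : Fin k → W) =>
      φ.Realize (Sum.elim xx (bt (η ++ [j]))))

/-- The formula `φ(x̄, ȳ)` has SOP₁, witnessed in `W`. -/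
def FormulaSOP1In (L' : FirstOrder.Language.{x, y}) (W : Type z) [L'.Structure W]
    {k n : ℕ} (φ : L'.Formula (Fin k ⊕ Fin n)) : Prop :=
  ∃ bt : List Bool → Fin n → W,
    (∀ σ : ℕ → Bool, FamConsistent fun (i : ℕ) (xx : Fin k → W) =>
      φ.Realize (Sum.elim xx (bt (List.ofFn fun j : Fin i => σ j)))) ∧
    (∀ η₁ η₂ : List Bool, (η₁ ++ [false]) <+: η₂ →
      ¬∃ xx : Fin k → W, φ.Realize (Sum.elim xx (bt η₂)) ∧
        φ.Realize (Sum.elim xx (bt (η₁ ++ [true]))))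

/-- Longest common prefix (meet in the tree `2^{<ω}`). -/
def meet : List Bool → List Bool → List Bool
  | a :: as, b :: bs => if a = b then a :: meet as bs else []
  | _, _ => []

/-- Strict tree order (strict prefix) on `2^{<ω}`. -/
def StrictPrefix (η ν : List Bool) : Prop := η <+: ν ∧ η ≠ ν

/-- Lexicographic order on `2^{<ω}`. -/
def LexLt (η ν : List Bool) : Prop :=
  StrictPrefix η ν ∨ ((meet η ν ++ [false]) <+: η ∧ (meet η ν ++ [true]) <+: ν)

/-- The meet `c 0 ∧ … ∧ c k`. -/
def meetInit (c : ℕ → List Bool) : ℕ → List Bool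
  | 0 => c 0
  | k + 1 => meet (meetInit c k) (c (k + 1))

/-- `c 0, …, c (l-1)` is a descending comb: a lexicographically increasing antichain
whose successive meets form a strictly descending chain in the tree order. -/
def IsDescendingComb (l : ℕ) (c : ℕ → List Bool) : Prop :=
  (∀ i j, i < l → j < l → i ≠ j → ¬(c i <+: c j)) ∧
  (∀ i j, i < j → j < l → LexLt (c i) (c j)) ∧
  (∀ k, k + 1 < l → StrictPrefix (meetInit c (k + 1)) (meetInit c k))

section DCTP

variable (L : FirstOrder.Language.{u, v}) (𝕄 : Type w) [L.Structure 𝕄]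

/-- `T` has `k`-DCTP₂. -/
def HasKDCTP2 (k : ℕ) : Prop :=
  ∃ (kx ny : ℕ) (φ : ParamFormula L 𝕄 (Fin kx ⊕ Fin ny)) (b : List Bool → Fin ny → 𝕄),
    (∀ σ : ℕ → Bool, FamKInconsistent k fun (n : ℕ) (xx : Fin kx → 𝕄) =>
      (φ.subst (b (List.ofFn fun i : Fin n => σ i))).Realize xx) ∧
    (∀ (l : ℕ) (c : ℕ → List Bool), IsDescendingComb l c →
      ∃ xx : Fin kx → 𝕄, ∀ i < l, (φ.subst (b (c i))).Realize xx)

/-- `T` is N-ω-DCTP₂: it does not have `k`-DCTP₂ for any `k`. -/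
def NOmegaDCTP2 : Prop := ∀ k : ℕ, ¬HasKDCTP2 L 𝕄 k

/-- A generic triple of sets of realizations of three partial types: the three sets
begin mutually indiscernible invariant Morley sequences over `M`. -/
def GenericTriple (M : Set 𝕄) {ι₁ ι₂ ι₃ : Type w} {nv₁ nv₂ nv₃ : ℕ}
    (A : ι₁ → Fin nv₁ → 𝕄) (B : ι₂ → Fin nv₂ → 𝕄) (C : ι₃ → Fin nv₃ → 𝕄) : Prop :=
  ∃ (IA : ℕ → ι₁ → Fin nv₁ → 𝕄) (IB : ℕ → ι₂ → Fin nv₂ → 𝕄) (IC : ℕ → ι₃ → Fin nv₃ → 𝕄),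
    IA 0 = A ∧ IB 0 = B ∧ IC 0 = C ∧
    IsInvMorleyOver L 𝕄 M (fun i => flat (IA i)) ∧
    IsInvMorleyOver L 𝕄 M (fun i => flat (IB i)) ∧
    IsInvMorleyOver L 𝕄 M (fun i => flat (IC i)) ∧
    IndiscernibleOver L 𝕄
      (M ∪ Set.range (flat fun i => flat (IB i)) ∪ Set.range (flat fun i => flat (IC i)))
      (fun i => flat (IA i)) ∧
    IndiscernibleOver L 𝕄
      (M ∪ Set.range (flat fun i => flat (IA i)) ∪ Set.range (flat fun i => flat (IC i)))
      (fun i => flat (IB i)) ∧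
    IndiscernibleOver L 𝕄
      (M ∪ Set.range (flat fun i => flat (IA i)) ∪ Set.range (flat fun i => flat (IB i)))
      (fun i => flat (IC i))

end DCTP

/-- The language of hypergraph sequences: one `n`-ary relation symbol for each `n`. -/
def hgLang : FirstOrder.Language.{0, 0} := ⟨fun _ => Empty, fun _ => PUnit⟩

section Hypergraph

variable (V : Type z) [hgLang.Structure V]

/-- The `n`-ary edge relation of a hypergraph sequence. -/
def hgRel {n : ℕ} (v : Fin n → V) : Prop :=
  @Structure.RelMap hgLang V _ n PUnit.unit v

/-- A family of vertices is a clique: every tuple of its members is an edge. -/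
def IsClique {ι : Type*} (a : ι → V) : Prop :=
  ∀ (n : ℕ) (f : Fin n → ι), hgRel V fun j => a (f j)

/-- A family of vertices is a `k`-anticlique: no `k`-tuple of its members (with
pairwise distinct indices) is an edge. -/
def IsAnticlique (k : ℕ) {ι : Type*} (a : ι → V) : Prop :=
  ∀ f : Fin k → ι, Function.Injective f → ¬hgRel V fun j => a (f j)

/-- The hypergraph sequence has MTP. -/
def HasMTP : Prop :=
  ∃ (k : ℕ) (bt : List ℕ → V),
    (∀ σ : ℕ → ℕ, IsClique V fun n : ℕ => bt (List.ofFn fun j : Fin n => σ j)) ∧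
    (∀ η : List ℕ, IsAnticlique V k fun n : ℕ => bt (η ++ [n]))

/-- The hypergraph sequence has an `(ω, ω, 1)`-array. -/
def HasOmegaArray : Prop :=
  ∃ (k : ℕ) (bt : ℕ → ℕ → V),
    (∀ i : ℕ, IsClique V (bt i)) ∧
    (∀ σ : ℕ → ℕ, IsAnticlique V k fun i : ℕ => bt i (σ i))

/-- The hypergraph sequence has MSOP₁. -/
def HasMSOP1 : Prop :=
  ∃ bt : List Bool → V,
    (∀ σ : ℕ → Bool, IsClique V fun n : ℕ => bt (List.ofFn fun j : Fin n => σ j)) ∧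
    (∀ η₁ η₂ : List Bool, (η₁ ++ [false]) <+: η₂ →
      IsAnticlique V 2 ![bt η₂, bt (η₁ ++ [true])])

/-- The hypergraph sequence has ω-MDCTP₂. -/
def HasOmegaMDCTP2 : Prop :=
  ∃ (k : ℕ) (bt : List Bool → V),
    (∀ σ : ℕ → Bool, IsAnticlique V k fun n : ℕ => bt (List.ofFn fun j : Fin n => σ j)) ∧
    (∀ (l : ℕ) (c : ℕ → List Bool), IsDescendingComb l c →
      IsClique V fun i : Fin l => bt (c i))

/-- The hypergraph sequence has the compatible order property. -/
def HasCompatibleOrderProperty : Prop :=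
  ∃ c d : ℕ → V,
    (∀ m n : ℕ, m < n →
      IsClique V fun i : Fin (n + 1) => if (i : ℕ) ≤ m then d i else c i) ∧
    (∀ m n : ℕ, m < n → ¬hgRel V ![c m, d n])

end Hypergraph

/-!
Suppose `φ(y, c)` is true of `b`, has its parameters in `M a`, and Kim-divides over `M` along the
Morley sequence of an invariant ultrafilter `U`. Assume that there is no tree of the kind forbidden
by co-NSOP₁.

* Arrays of pairs of realizations of `tp(a/M)` whose second column is a Morley sequence of `U` and
  in which the two entries of a row have the same type over the rows before it contain no
  consistent first column of unbounded length, for they would grow into such a tree. Since the first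
  column may realize any limit types of tuples from `M`, its inconsistency can be pulled back to
  tuples of `M` close to `a`: for some `K'`, almost all `K'`-tuples for any product of `K'`
  ultrafilters converging to `tp(a/M)` are inconsistent with `φ`.
* Let `D` be an ultrafilter of tuples from `M` converging to `tp(b/M)`. As `a` is Kim-independent
  from `b`, for almost all `D`-generic sequences of any length there are `a'` in `M` close to `a`
  that satisfy `φ` with all of its members.
* Iterating the second fact and Ramsey's theorem for trees gives arrays whose first column is
  consistent, by a common branch, and whose second column is inconsistent by the first fact.
  These arrays produce the forbidden tree after all.
-/

section Definability

open Set

variable {L : FirstOrder.Language.{u, v}} {𝕄 : Type w} [L.Structure 𝕄] {A B : Set 𝕄}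
variable {α β γ ζ : Type*}

theorem definable_preimage_elim_comp {s : Set (α → 𝕄)} (hs : A.Definable L s) (f : α → A ⊕ β) :
    A.Definable L {v : β → 𝕄 | Sum.elim Subtype.val v ∘ f ∈ s} := by
  obtain ⟨φ, rfl⟩ := definable_iff_exists_formula_sum.1 hs
  refine definable_iff_exists_formula_sum.2 ⟨φ.relabel (Sum.elim Sum.inl f), ?_⟩
  ext v
  simp only [mem_ofPred_eq, Formula.realize_relabel, Sum.comp_elim, Sum.elim_comp_inl]

theorem definable_fiber {s : Set (ζ ⊕ α → 𝕄)} (hs : A.Definable L s) (hAB : A ⊆ B) {z : ζ → 𝕄}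
    (hz : range z ⊆ B) : B.Definable L {x : α → 𝕄 | Sum.elim z x ∈ s} := by
  refine (congrArg _ (Set.ext fun x => ?_)).mp (definable_preimage_elim_comp (hs.mono hAB)
    (Sum.map (fun i => ⟨z i, hz (mem_range_self i)⟩) id))
  simp only [mem_ofPred_eq, Sum.elim_comp_map, Function.comp_id]
  rfl

theorem definable_iff_exists_paramFormula {s : Set (α → 𝕄)} :
    B.Definable L s ↔ ∃ θ : ParamFormula L 𝕄 α, θ.ParamsIn B ∧ s = {x | θ.Realize x} := by
  constructor
  · intro hs
    obtain ⟨B₀, hB₀, hs⟩ := definable_iff_finitely_definable.1 hs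
    obtain ⟨φ, rfl⟩ := definable_iff_exists_formula_sum.1 hs
    let e := B₀.equivFin
    refine ⟨⟨Fin B₀.card, φ.relabel (Sum.elim (Sum.inr ∘ e) Sum.inl), (↑) ∘ e.symm⟩,
      fun i => hB₀ (e.symm i).2, ext fun x => ?_⟩
    simp only [mem_ofPred_eq, ParamFormula.Realize, Formula.realize_relabel]
    refine iff_of_eq (congrArg φ.Realize ?_)
    ext (b | i) <;> simp
  · rintro ⟨θ, hθ, rfl⟩
    refine definable_iff_exists_formula_sum.2
      ⟨θ.toFormula.relabel (Sum.elim Sum.inr fun i => Sum.inl ⟨θ.params i, hθ i⟩), ext fun x => ?_⟩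
    simp only [mem_ofPred_eq, ParamFormula.Realize, Formula.realize_relabel]
    refine iff_of_eq (congrArg θ.toFormula.Realize ?_)
    ext (i | i) <;> rfl

theorem exists_finite_support_left {s : Set (γ ⊕ α → 𝕄)} (hs : A.Definable L s) :
    ∃ (j : ℕ) (g : Fin j → γ) (t : Set (Fin j ⊕ α → 𝕄)), Function.Injective g ∧
      A.Definable L t ∧ ∀ c v, Sum.elim c v ∈ s ↔ Sum.elim (c ∘ g) v ∈ t := by
  classical
  obtain ⟨φ, rfl⟩ := definable_iff_exists_formula_sum.1 hs
  let S : Finset γ := φ.freeVarFinset.preimage (Sum.inr ∘ Sum.inl)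
    (Sum.inr_injective.comp Sum.inl_injective).injOn
  have hS : ∀ c, Sum.inr (Sum.inl c) ∈ φ.freeVarFinset → c ∈ S := fun c => by simp [S]
  let e := S.equivFin
  let f : φ.freeVarFinset → A ⊕ (Fin S.card ⊕ α)
    | ⟨Sum.inl a, _⟩ => Sum.inl a
    | ⟨Sum.inr (Sum.inl c), h⟩ => Sum.inr (Sum.inl (e ⟨c, hS c h⟩))
    | ⟨Sum.inr (Sum.inr i), _⟩ => Sum.inr (Sum.inr i)
  refine ⟨S.card, Subtype.val ∘ e.symm, _, Subtype.val_injective.comp e.symm.injective,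
    definable_iff_exists_formula_sum.2 ⟨BoundedFormula.restrictFreeVar φ f, rfl⟩, fun c v => ?_⟩
  refine (BoundedFormula.realize_restrictFreeVar (Sum.elim Subtype.val (Sum.elim c v)) ?_).symm
  rintro ⟨a | c | i, h⟩ <;> simp [f]

theorem exists_finite_support {s : Set (γ ⊕ α → 𝕄)} (hs : A.Definable L s) :
    ∃ (k n : ℕ) (g : Fin k → γ) (g' : Fin n → α) (Φ : Set (Fin k ⊕ Fin n → 𝕄)),
      Function.Injective g ∧ A.Definable L Φ ∧
        ∀ c v, Sum.elim c v ∈ s ↔ Sum.elim (c ∘ g) (v ∘ g') ∈ Φ := by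
  obtain ⟨k, g, t, hg, ht, hst⟩ := exists_finite_support_left hs
  obtain ⟨n, g', Φ, -, hΦ, htΦ⟩ := exists_finite_support_left (ht.preimage_comp Sum.swap)
  refine ⟨k, n, g, g', _, hg, hΦ.preimage_comp Sum.swap, fun c v => ?_⟩
  rw [mem_preimage, Sum.elim_swap, ← htΦ, mem_preimage, Sum.elim_swap, hst]

theorem definable_exists [Nonempty 𝕄] {s : Set (α ⊕ γ → 𝕄)} (hs : A.Definable L s) :
    A.Definable L {v : α → 𝕄 | ∃ w, Sum.elim v w ∈ s} := by
  obtain ⟨j, g, t, hg, ht, hst⟩ := exists_finite_support_left (hs.preimage_comp Sum.swap)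
  refine (congrArg _ (Set.ext fun v => ?_)).mp (ht.preimage_comp Sum.swap).exists_of_finite
  have hst' : ∀ w, Sum.elim v w ∈ s ↔ Sum.elim (w ∘ g) v ∈ t := fun w => by
    rw [← hst, mem_preimage, Sum.elim_swap]
  simp only [mem_ofPred_eq, mem_preimage, Sum.elim_swap, hst']
  constructor
  · rintro ⟨w, hw⟩
    refine ⟨Function.extend g w fun _ => Classical.arbitrary 𝕄, ?_⟩
    rwa [Function.extend_comp hg]
  · rintro ⟨w, hw⟩
    exact ⟨w ∘ g, hw⟩

theorem exists_mem_of_definable {M : L.ElementarySubstructure 𝕄} [Finite α] {s : Set (α → 𝕄)}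
    (hs : (M : Set 𝕄).Definable L s) (hne : s.Nonempty) :
    ∃ y : α → (M : Set 𝕄), Subtype.val ∘ y ∈ s := by
  obtain ⟨φ, rfl⟩ := definable_iff_exists_formula_sum.1 hs
  let φM : L.Formula (M ⊕ α) := φ
  have hM : (φM.iExs α).Realize ((↑) : M → 𝕄) := Formula.realize_iExs.2 hne
  have hM' : (φM.iExs α).Realize (id : M → M) := (M.subtype.map_formula _ _).1 hM
  obtain ⟨y, hy⟩ := Formula.realize_iExs.1 hM'
  refine ⟨y, ?_⟩
  rw [← M.subtype.map_formula, Sum.comp_elim] at hy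
  exact hy

end Definability

section Types

open Set

variable {L : FirstOrder.Language.{u, v}} {𝕄 : Type w} [L.Structure 𝕄] {A : Set 𝕄}
variable {α β : Type*}

theorem tpEq_iff {x x' : α → 𝕄} :
    TpEq L 𝕄 A x x' ↔ ∀ s, A.Definable L s → (x ∈ s ↔ x' ∈ s) := by
  constructor
  · intro h s hs
    obtain ⟨θ, hθ, rfl⟩ := definable_iff_exists_paramFormula.1 hs
    exact h θ hθ
  · exact fun h θ hθ => h _ (definable_iff_exists_paramFormula.2 ⟨θ, hθ, rfl⟩)

theorem tpEq_of_imp {x x' : α → 𝕄} (h : ∀ s, A.Definable L s → x ∈ s → x' ∈ s) :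
    TpEq L 𝕄 A x x' :=
  tpEq_iff.2 fun s hs => ⟨h s hs, fun hx' => by_contra fun hx => h _ hs.compl hx hx'⟩

namespace TpEq

variable {x x' x'' : α → 𝕄}

theorem mem_iff (h : TpEq L 𝕄 A x x') {s : Set (α → 𝕄)} (hs : A.Definable L s) :
    x ∈ s ↔ x' ∈ s :=
  tpEq_iff.1 h s hs

theorem refl (x : α → 𝕄) : TpEq L 𝕄 A x x := fun _ _ => Iff.rfl

theorem symm (h : TpEq L 𝕄 A x x') : TpEq L 𝕄 A x' x := fun θ hθ => (h θ hθ).symm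

theorem trans (h : TpEq L 𝕄 A x x') (h' : TpEq L 𝕄 A x' x'') : TpEq L 𝕄 A x x'' :=
  fun θ hθ => (h θ hθ).trans (h' θ hθ)

theorem elim_comp (h : TpEq L 𝕄 A x x') (f : β → A ⊕ α) :
    TpEq L 𝕄 A (Sum.elim Subtype.val x ∘ f) (Sum.elim Subtype.val x' ∘ f) :=
  tpEq_iff.2 fun _ hs => h.mem_iff (definable_preimage_elim_comp hs f)

theorem comp (h : TpEq L 𝕄 A x x') (f : β → α) : TpEq L 𝕄 A (x ∘ f) (x' ∘ f) :=
  tpEq_iff.2 fun _ hs => h.mem_iff (hs.preimage_comp f)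

end TpEq

end Types

section LimitTypes

open Set Filter

variable {L : FirstOrder.Language.{u, v}} {𝕄 : Type w} [L.Structure 𝕄] {A B : Set 𝕄}
variable {α β : Type*}

variable (L) in
/-- The type of `x` over `B`, encoded as the filter generated by the `B`-definable sets
containing `x`. -/
def typeFilter (B : Set 𝕄) (x : α → 𝕄) : Filter (α → 𝕄) where
  sets := {t | ∃ s, B.Definable L s ∧ x ∈ s ∧ s ⊆ t}
  univ_sets := ⟨univ, definable_univ, mem_univ x, subset_rfl⟩
  sets_of_superset := fun ⟨s, hs, hx, hst⟩ htt' => ⟨s, hs, hx, hst.trans htt'⟩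
  inter_sets := fun ⟨s, hs, hx, hst⟩ ⟨s', hs', hx', hst'⟩ =>
    ⟨s ∩ s', hs.inter hs', ⟨hx, hx'⟩, inter_subset_inter hst hst'⟩

theorem mem_typeFilter_of_definable {x : α → 𝕄} {s : Set (α → 𝕄)} (hs : B.Definable L s)
    (hx : x ∈ s) : s ∈ typeFilter L B x :=
  ⟨s, hs, hx, subset_rfl⟩

variable (L B) in
/-- The trace of the type of `x` over `B` on the tuples from `B`. -/
def traceFilter (x : α → 𝕄) : Filter (α → B) :=
  (typeFilter L B x).comap (Subtype.val ∘ ·)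

theorem eventually_traceFilter {x : α → 𝕄} {s : Set (α → 𝕄)} (hs : B.Definable L s)
    (hx : x ∈ s) : ∀ᶠ y in traceFilter L B x, Subtype.val ∘ y ∈ s :=
  preimage_mem_comap (mem_typeFilter_of_definable hs hx)

theorem neBot_traceFilter (M : L.ElementarySubstructure 𝕄) [Finite α] (x : α → 𝕄) :
    (traceFilter L (M : Set 𝕄) x).NeBot := by
  refine comap_neBot fun t ⟨s, hs, hx, hst⟩ => ?_
  obtain ⟨y, hy⟩ := exists_mem_of_definable hs ⟨x, hx⟩
  exact ⟨y, hst hy⟩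

variable (L) in
/-- `x` realizes over `B` the limit type of `F`, which consists of the formulas that hold
eventually along `F`. -/
def RealizesLimit (F : Filter (α → 𝕄)) (B : Set 𝕄) (x : α → 𝕄) : Prop :=
  ∀ s, B.Definable L s → s ∈ F → x ∈ s

theorem RealizesLimit.map_elim_comp {F : Filter (α → 𝕄)} {x : α → 𝕄}
    (h : RealizesLimit L F B x) (hAB : A ⊆ B) (f : β → A ⊕ α) :
    RealizesLimit L (F.map (Sum.elim Subtype.val · ∘ f)) B (Sum.elim Subtype.val x ∘ f) := by
  refine fun s hs hF => h _ ?_ hF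
  refine (congrArg _ (Set.ext fun x => ?_)).mp
    (definable_preimage_elim_comp hs (Sum.map (Set.inclusion hAB) id ∘ f))
  rw [mem_ofPred_eq, ← Function.comp_assoc, Sum.elim_comp_map]
  rfl

theorem RealizesLimit.mono {B' : Set 𝕄} {F : Filter (α → 𝕄)} {x : α → 𝕄}
    (h : RealizesLimit L F B x) (hB : B' ⊆ B) : RealizesLimit L F B' x :=
  fun s hs => h s (hs.mono hB)

theorem RealizesLimit.tpEq {F : Filter (α → 𝕄)} {x a₀ : α → 𝕄} (h : RealizesLimit L F B x)
    (hF : F ≤ typeFilter L B a₀) : TpEq L 𝕄 B a₀ x :=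
  tpEq_of_imp fun s hs ha => h s hs (hF (mem_typeFilter_of_definable hs ha))

theorem RealizesLimit.mem_iff {U : Ultrafilter (α → 𝕄)} {x : α → 𝕄}
    (h : RealizesLimit L (U : Filter (α → 𝕄)) B x) {s : Set (α → 𝕄)} (hs : B.Definable L s) :
    x ∈ s ↔ s ∈ U :=
  ⟨fun hx => by_contra fun hU => h _ hs.compl (Ultrafilter.compl_mem_iff_notMem.2 hU) hx, h s hs⟩

theorem RealizesLimit.le_typeFilter {U : Ultrafilter (α → 𝕄)} {x : α → 𝕄}
    (h : RealizesLimit L (U : Filter (α → 𝕄)) B x) : (U : Filter (α → 𝕄)) ≤ typeFilter L B x :=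
  fun _ ⟨_, hs, hx, hst⟩ => mem_of_superset ((h.mem_iff hs).1 hx) hst

variable (L) in
/-- Limit types in countably many variables are realized over `A` together with countably many
further parameters. This is the saturation of the monster model that symmetry depends on. -/
def CountablySaturatedOver (A : Set 𝕄) : Prop :=
  ∀ ⦃α : Type⦄ [Countable α] (C : Set 𝕄), C.Countable → ∀ (F : Filter (α → 𝕄)) [F.NeBot],
    ∃ x, RealizesLimit L F (A ∪ C) x

theorem countablySaturatedOver_of_isMonster_of_aleph0_le (κ : Cardinal.{w}) [IsMonster L 𝕄 κ]
    (hA : Cardinal.mk A < κ) (hA₀ : Cardinal.aleph0 ≤ Cardinal.mk A) :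
    CountablySaturatedOver L A := by
  intro α _ C hC F _
  have hα : Cardinal.mk (ULift.{w} α) < κ := (Cardinal.mk_le_aleph0.trans hA₀).trans_lt hA
  have hAC : Cardinal.mk ↥(A ∪ C) < κ :=
    (Cardinal.mk_union_le A C).trans_lt
      ((Cardinal.add_le_of_le hA₀ le_rfl (hC.le_aleph0.trans hA₀)).trans_lt hA)
  obtain ⟨x, hx⟩ := IsMonster.saturated (κ := κ) (A ∪ C)
    {θ : ParamFormula L 𝕄 (ULift.{w} α) |
      θ.ParamsIn (A ∪ C) ∧ ∀ᶠ y in F, θ.Realize (y ∘ ULift.down)}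
    hα hAC (fun _ h => h.1) fun S hS => by
      obtain ⟨y, hy⟩ := ((eventually_all_finset S).2 fun θ hθ => (hS θ hθ).2).exists
      exact ⟨_, hy⟩
  refine ⟨x ∘ ULift.up, fun s hs hF => ?_⟩
  obtain ⟨θ, hθ, hsθ⟩ :=
    definable_iff_exists_paramFormula.1 (hs.preimage_comp (ULift.up : α → ULift.{w} α))
  have hθs : ∀ y, y ∘ ULift.up ∈ s ↔ θ.Realize y := fun y => Set.ext_iff.1 hsθ y
  exact (hθs x).2 (hx θ ⟨hθ, Eventually.mono hF fun y hy => (hθs _).1 hy⟩)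

theorem countablySaturatedOver_of_finite [Finite 𝕄] (A : Set 𝕄) : CountablySaturatedOver L A := by
  intro α _ C _ F _
  let U := Ultrafilter.of F
  choose x hx using fun i => (U.map (Function.eval i)).eq_pure_of_finite
  have hUx : ∀ i, ∀ᶠ y in (U : Filter (α → 𝕄)), y i = x i := fun i =>
    have hi : {x i} ∈ U.map (Function.eval i) := by rw [hx]; exact mem_singleton (x i)
    Ultrafilter.mem_map.1 hi
  refine ⟨x, fun s hs hF => ?_⟩
  obtain ⟨j, g, t, -, -, hst⟩ :=
    exists_finite_support_left (hs.preimage_comp (Sum.inl : α → α ⊕ Empty))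
  have hst : ∀ z, z ∈ s ↔ Sum.elim (z ∘ g) Empty.elim ∈ t := fun z => hst z Empty.elim
  obtain ⟨y, hys, hyx⟩ :=
    (Eventually.and (Ultrafilter.of_le F hF) (eventually_all.2 fun i => hUx (g i))).exists
  have hyx : y ∘ g = x ∘ g := funext hyx
  rwa [hst, ← hyx, ← hst]

theorem countablySaturatedOver_of_isMonster (κ : Cardinal.{w}) [IsMonster L 𝕄 κ]
    {M : L.ElementarySubstructure 𝕄} (hM : Cardinal.mk (M : Set 𝕄) < κ) :
    CountablySaturatedOver L (M : Set 𝕄) := by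
  rcases finite_or_infinite 𝕄 with _ | h𝕄
  · exact countablySaturatedOver_of_finite _
  · have : Infinite M := M.elementarilyEquivalent.infinite_iff.2 h𝕄
    exact countablySaturatedOver_of_isMonster_of_aleph0_le κ hM (Cardinal.aleph0_le_mk M)

theorem TpEq.exists_elim [Nonempty 𝕄] (hsat : CountablySaturatedOver L A) {ζ γ : Type}
    [Countable ζ] [Countable γ] {x x' : ζ → 𝕄} (h : TpEq L 𝕄 A x x') (w : γ → 𝕄) :
    ∃ w', TpEq L 𝕄 A (Sum.elim x w) (Sum.elim x' w') := by
  let F := (typeFilter L A (Sum.elim x w)).comap (Sum.elim x' : (γ → 𝕄) → ζ ⊕ γ → 𝕄)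
  have : F.NeBot := by
    refine comap_neBot fun t ht => ?_
    obtain ⟨s, hs, hw, hst⟩ := ht
    obtain ⟨w', hw'⟩ := (h.mem_iff (definable_exists hs)).1 ⟨w, hw⟩
    exact ⟨w', hst hw'⟩
  obtain ⟨w', hw'⟩ := hsat (range x') (countable_range x') F
  exact ⟨w', tpEq_of_imp fun s hs hw => hw' _ (definable_fiber hs subset_union_left
    subset_union_right) (preimage_mem_comap (mem_typeFilter_of_definable hs hw))⟩

end LimitTypes

section InvariantFilters

open Set Filter

variable {L : FirstOrder.Language.{u, v}} {𝕄 : Type w} [L.Structure 𝕄] {A : Set 𝕄}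
variable {α β : Type*} {ζ : Type}

variable (L) in
/-- The limit type of `F` is invariant over `A`. -/
def IsInvariantFilter (A : Set 𝕄) (F : Filter (α → 𝕄)) : Prop :=
  ∀ ⦃ζ : Type⦄ ⦃z z' : ζ → 𝕄⦄, TpEq L 𝕄 A z z' → ∀ ⦃s : Set (ζ ⊕ α → 𝕄)⦄, A.Definable L s →
    (∀ᶠ x in F, Sum.elim z x ∈ s) → ∀ᶠ x in F, Sum.elim z' x ∈ s

theorem IsInvariantFilter.map_elim_comp {F : Filter (α → 𝕄)} (hF : IsInvariantFilter L A F)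
    (f : β → A ⊕ α) : IsInvariantFilter L A (F.map (Sum.elim Subtype.val · ∘ f)) := by
  intro ζ z z' hz s hs hev
  have hcomp : ∀ (z : ζ → 𝕄) (x : α → 𝕄), Sum.elim Subtype.val (Sum.elim z x) ∘
      Sum.elim (Sum.inr ∘ Sum.inl) (Sum.map id Sum.inr ∘ f) =
        Sum.elim z (Sum.elim Subtype.val x ∘ f) := fun z x => by
    rw [Sum.comp_elim, ← Function.comp_assoc, ← Function.comp_assoc, Sum.elim_comp_map]
    rfl
  have := hF hz (definable_preimage_elim_comp hs
    (Sum.elim (Sum.inr ∘ Sum.inl) (Sum.map id Sum.inr ∘ f)))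
  simp only [mem_ofPred_eq, hcomp] at this
  exact this hev

theorem definable_elim_val {s : Set (β ⊕ α → 𝕄)} (hs : A.Definable L s) (y : α → A) :
    A.Definable L {z : β → 𝕄 | Sum.elim z (Subtype.val ∘ y) ∈ s} := by
  refine (congrArg _ (Set.ext fun z => ?_)).mp
    (definable_preimage_elim_comp hs (Sum.elim Sum.inr (Sum.inl ∘ y)))
  simp only [mem_ofPred_eq, Sum.comp_elim, Sum.elim_comp_inr, ← Function.comp_assoc,
    Sum.elim_comp_inl]

theorem isInvariantFilter_map_val (D : Filter (α → A)) :
    IsInvariantFilter L A (D.map (Subtype.val ∘ ·)) := by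
  intro ζ z z' hz s hs hev
  rw [eventually_map] at hev ⊢
  exact hev.mono fun y => (hz.mem_iff (definable_elim_val hs y)).1

theorem IsInvariantFilter.tpEq_elim {U : Ultrafilter (α → 𝕄)}
    (hU : IsInvariantFilter L A (U : Filter (α → 𝕄))) {z z' : ζ → 𝕄} (hz : TpEq L 𝕄 A z z')
    {B B' : Set 𝕄} (hAB : A ⊆ B) (hzB : range z ⊆ B) (hAB' : A ⊆ B') (hzB' : range z' ⊆ B')
    {x x' : α → 𝕄} (hx : RealizesLimit L (U : Filter (α → 𝕄)) B x)
    (hx' : RealizesLimit L (U : Filter (α → 𝕄)) B' x') :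
    TpEq L 𝕄 A (Sum.elim z x) (Sum.elim z' x') :=
  tpEq_of_imp fun _ hs hzx => hx' _ (definable_fiber hs hAB' hzB')
    (hU hz hs ((hx.mem_iff (definable_fiber hs hAB hzB)).1 hzx))

end InvariantFilters

section Tensor

open Filter

variable {X : Type*} {Y : Type*}

/-- The iterated tensor product of a list of ultrafilters: the first entry is drawn first, hence
each entry is generic over the later ones. -/
noncomputable def tensor : List (Ultrafilter X) → Ultrafilter (List X)
  | [] => pure []
  | D :: Ds => D.bind fun x => (tensor Ds).map (x :: ·)

theorem eventually_tensor_nil {p : List X → Prop} :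
    (∀ᶠ l in tensor ([] : List (Ultrafilter X)), p l) ↔ p [] :=
  Iff.rfl

theorem eventually_tensor_cons {D : Ultrafilter X} {Ds : List (Ultrafilter X)}
    {p : List X → Prop} :
    (∀ᶠ l in tensor (D :: Ds), p l) ↔ ∀ᶠ x in D, ∀ᶠ l in tensor Ds, p (x :: l) :=
  Iff.rfl

theorem eventually_tensor_append (Ds Ds' : List (Ultrafilter X)) {p : List X → Prop} :
    (∀ᶠ l in tensor (Ds ++ Ds'), p l) ↔ ∀ᶠ l in tensor Ds, ∀ᶠ l' in tensor Ds', p (l ++ l') := by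
  induction Ds generalizing p with
  | nil => exact Iff.rfl
  | cons D Ds ih =>
    rw [List.cons_append, eventually_tensor_cons, eventually_tensor_cons]
    exact eventually_congr (Eventually.of_forall fun x => ih)

theorem eventually_length_tensor (Ds : List (Ultrafilter X)) :
    ∀ᶠ l in (tensor Ds : Filter (List X)), l.length = Ds.length := by
  induction Ds with
  | nil => exact eventually_tensor_nil.2 rfl
  | cons D Ds ih =>
    exact eventually_tensor_cons.2 (Eventually.of_forall fun x => ih.mono fun l hl => by simp [hl])

theorem tendsto_flatMap_tensor {E : Ultrafilter X} {Ds : List (Ultrafilter Y)} {f : X → List Y}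
    (h : Tendsto f E (tensor Ds)) (r : ℕ) :
    Tendsto (List.flatMap f) (tensor (List.replicate r E))
      (tensor (List.replicate r Ds).flatten) := by
  induction r with
  | zero => exact fun s hs => hs
  | succ r ih =>
    intro s hs
    rw [List.replicate_succ, List.flatten_cons] at hs
    refine eventually_tensor_cons.2
      ((h.eventually ((eventually_tensor_append _ _).1 hs)).mono fun x hx => ?_)
    exact (ih.eventually hx).mono fun l hl => by rwa [List.flatMap_cons]

theorem eventually_tensor_replicate_forall {E : Ultrafilter X} {p : X → Prop}
    (h : ∀ᶠ x in E, p x) (r : ℕ) :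
    ∀ᶠ l in (tensor (List.replicate r E) : Filter (List X)), ∀ x ∈ l, p x := by
  induction r with
  | zero => exact eventually_tensor_nil.2 (List.forall_mem_nil p)
  | succ r ih =>
    exact eventually_tensor_cons.2
      (h.mono fun x hx => ih.mono fun l hl => List.forall_mem_cons.2 ⟨hx, hl⟩)

theorem eventually_tensor_replicate_pairwise {E : Ultrafilter X} {p : X → X → Prop}
    (h : ∀ᶠ x in E, ∀ᶠ y in E, p x y) (r : ℕ) :
    ∀ᶠ l in (tensor (List.replicate r E) : Filter (List X)), l.Pairwise p := by
  induction r with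
  | zero => exact eventually_tensor_nil.2 List.Pairwise.nil
  | succ r ih =>
    exact eventually_tensor_cons.2 (h.mono fun x hx =>
      (ih.and (eventually_tensor_replicate_forall hx r)).mono fun l hl =>
        List.pairwise_cons.2 ⟨hl.2, hl.1⟩)

theorem eventually_tensor_forall_sublist {p : List X → Prop} {K : ℕ} {Ds : List (Ultrafilter X)}
    (h : ∀ Ds', Ds'.Sublist Ds → Ds'.length = K → ∀ᶠ l in tensor Ds', p l) :
    ∀ᶠ l in tensor Ds, ∀ l', l'.Sublist l → l'.length = K → p l' := by
  induction Ds generalizing K p with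
  | nil =>
    refine eventually_tensor_nil.2 fun l' hl' hK => ?_
    obtain rfl := List.sublist_nil.1 hl'
    exact eventually_tensor_nil.1 (h [] (List.Sublist.refl _) hK)
  | cons D Ds ih =>
    have hskip := ih fun Ds' hDs' => h Ds' (hDs'.cons D)
    rw [eventually_tensor_cons]
    obtain _ | K := K
    · refine Eventually.of_forall fun x => hskip.mono fun l hl l' _ hK => ?_
      obtain rfl := List.eq_nil_of_length_eq_zero hK
      exact hl [] (List.nil_sublist l) rfl
    have htake : ∀ᶠ x in D, ∀ Ds' ∈ {Ds' | Ds' ∈ Ds.sublists},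
        Ds'.length = K → ∀ᶠ l in tensor Ds', p (x :: l) := by
      refine (eventually_all_finite (List.finite_toSet Ds.sublists)).2 fun Ds' hDs' => ?_
      rw [eventually_imp_distrib_left]
      exact fun hK => h (D :: Ds') ((List.mem_sublists.1 hDs').cons_cons D) (by simp [hK])
    filter_upwards [htake] with x hx
    filter_upwards [hskip, ih fun Ds' hDs' => hx Ds' (List.mem_sublists.2 hDs')]
      with l hl hl' l' hsub hK
    cases hsub with
    | cons _ hsub => exact hl _ hsub hK
    | cons_cons _ hsub => exact hl' _ hsub (Nat.succ.inj hK)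

end Tensor

section Consistency

open Set

variable {L : FirstOrder.Language.{u, v}} {𝕄 : Type w} [L.Structure 𝕄] {A : Set 𝕄}
variable {ι ν σ : Type*}

/-- The instances `Φ(y, x)` for `x ∈ X` of the relation `Φ` are jointly satisfiable. -/
def Consistent (Φ : Set (ι ⊕ ν → 𝕄)) (X : Set (ν → 𝕄)) : Prop :=
  ∃ y, ∀ x ∈ X, Sum.elim y x ∈ Φ

theorem Consistent.mono {Φ : Set (ι ⊕ ν → 𝕄)} {X Y : Set (ν → 𝕄)} (h : Consistent Φ Y)
    (hXY : X ⊆ Y) : Consistent Φ X :=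
  h.imp fun _ hy x hx => hy x (hXY hx)

theorem definable_consistent [Nonempty 𝕄] {Φ : Set (ι ⊕ ν → 𝕄)} (hΦ : A.Definable L Φ)
    {S : Set σ} (hS : S.Finite) :
    A.Definable L {v : σ × ν → 𝕄 | Consistent Φ (Function.curry v '' S)} := by
  have h := definable_biInter_finset
    (fun p => hΦ.preimage_comp (Sum.elim Sum.inr fun j => Sum.inl (p, j) : ι ⊕ ν → σ × ν ⊕ ι))
    hS.toFinset
  refine (congrArg _ (Set.ext fun v => exists_congr fun y => ?_)).mp (definable_exists h)
  simp only [mem_iInter, Set.Finite.mem_toFinset, mem_preimage, Sum.comp_elim, forall_mem_image,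
    Sum.elim_comp_inr]
  rfl

theorem TpEq.consistent_iff [Nonempty 𝕄] {Φ : Set (ι ⊕ ν → 𝕄)} (hΦ : A.Definable L Φ)
    {S : Set σ} (hS : S.Finite) {c c' : σ → ν → 𝕄} (h : TpEq L 𝕄 A (flat c) (flat c')) :
    Consistent Φ (c '' S) ↔ Consistent Φ (c' '' S) :=
  h.mem_iff (definable_consistent hΦ hS)

theorem TpEq.apply_eq {x x' : σ → 𝕄} (h : TpEq L 𝕄 A x x') {i j : σ} (hij : x i = x j) :
    x' i = x' j := by
  have hs : A.Definable L {v : σ → 𝕄 | v i = v j} :=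
    ⟨Term.equal (Term.var i) (Term.var j), ext fun v => by simp⟩
  exact (h.mem_iff hs).1 hij

end Consistency

section GenericLists

open Set Filter

variable {L : FirstOrder.Language.{u, v}} {𝕄 : Type w} [L.Structure 𝕄] {A : Set 𝕄}
variable {ι : Type*} {ν : Type}

variable (A) in
/-- The entries of a list of tuples as one tuple, padded by some element of `A`. -/
noncomputable def flatList [Nonempty A] (l : List (ν → 𝕄)) : ℕ × ν → 𝕄 :=
  flat fun i => l.getD i fun _ => (Classical.arbitrary A : A)

/-- Splits off the first block of coordinates. -/
def unconsIndex : ℕ × ν → (ℕ × ν) ⊕ ν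
  | (0, j) => Sum.inr j
  | (i + 1, j) => Sum.inl (i, j)

theorem flatList_cons [Nonempty A] (x : ν → 𝕄) (l : List (ν → 𝕄)) :
    flatList A (x :: l) = Sum.elim (flatList A l) x ∘ unconsIndex := by
  ext ⟨_ | i, j⟩ <;> rfl

theorem curry_flatList_image [Nonempty A] (l : List (ν → 𝕄)) :
    Function.curry (flatList A l) '' Iio l.length = {x | x ∈ l} := by
  ext x
  simp only [mem_image, mem_Iio, mem_ofPred_eq, List.mem_iff_getElem]
  refine exists_congr fun i => ⟨fun ⟨hi, h⟩ => ⟨hi, ?_⟩, fun ⟨hi, h⟩ => ⟨hi, ?_⟩⟩ <;> rw [← h]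
  exacts [(List.getD_eq_getElem _ _ hi).symm, List.getD_eq_getElem _ _ hi]

theorem range_flatList_subset [Nonempty A] (l : List (ν → 𝕄)) :
    range (flatList A l) ⊆ A ∪ ⋃ y ∈ l, range y := by
  rintro _ ⟨⟨i, j⟩, rfl⟩
  rcases lt_or_ge i l.length with hi | hi
  · refine Or.inr (mem_iUnion₂.2 ⟨l[i], List.getElem_mem hi, j, ?_⟩)
    exact congrFun (List.getD_eq_getElem _ _ hi).symm j
  · refine Or.inl ?_
    rw [flatList, flat, List.getD_eq_default _ _ hi]
    exact Subtype.prop _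

variable (L A) in
/-- Every entry of the list realizes the limit type of the corresponding ultrafilter over `A`
together with the later entries. -/
inductive IsGenericList : List (Ultrafilter (ν → 𝕄)) → List (ν → 𝕄) → Prop
  | nil : IsGenericList [] []
  | cons {U : Ultrafilter (ν → 𝕄)} {Us : List (Ultrafilter (ν → 𝕄))} {x : ν → 𝕄}
      {l : List (ν → 𝕄)} (hx : RealizesLimit L (U : Filter (ν → 𝕄)) (A ∪ ⋃ y ∈ l, range y) x)
      (hl : IsGenericList Us l) : IsGenericList (U :: Us) (x :: l)

namespace IsGenericList

variable {Us : List (Ultrafilter (ν → 𝕄))} {l l' : List (ν → 𝕄)}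

theorem length_eq (h : IsGenericList L A Us l) : l.length = Us.length := by
  induction h with
  | nil => rfl
  | cons _ _ ih => rw [List.length_cons, List.length_cons, ih]

theorem tpEq_flatList [Nonempty A] (h : IsGenericList L A Us l) (h' : IsGenericList L A Us l')
    (hUs : ∀ U ∈ Us, IsInvariantFilter L A (U : Filter (ν → 𝕄))) :
    TpEq L 𝕄 A (flatList A l) (flatList A l') := by
  induction h generalizing l' with
  | nil =>
    cases h'
    exact TpEq.refl _
  | cons hx _ ih =>
    cases h' with
    | cons hx' hl' =>
      obtain ⟨hU, hUs⟩ := List.forall_mem_cons.1 hUs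
      rw [flatList_cons, flatList_cons]
      exact (hU.tpEq_elim (ih hl' hUs) subset_union_left (range_flatList_subset _)
        subset_union_left (range_flatList_subset _) hx hx').comp _

theorem consistent_iff [Nonempty A] {Φ : Set (ι ⊕ ν → 𝕄)} (hΦ : A.Definable L Φ)
    (h : IsGenericList L A Us l) (h' : IsGenericList L A Us l')
    (hUs : ∀ U ∈ Us, IsInvariantFilter L A (U : Filter (ν → 𝕄))) :
    Consistent Φ {x | x ∈ l} ↔ Consistent Φ {x | x ∈ l'} := by
  have : Nonempty 𝕄 := Nonempty.map Subtype.val ‹Nonempty A›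
  rw [← curry_flatList_image (A := A) l, ← curry_flatList_image (A := A) l', h.length_eq,
    h'.length_eq]
  exact (h.tpEq_flatList h' hUs).consistent_iff hΦ (finite_Iio _)

theorem flatList_mem_iff [Nonempty A] {Ds : List (Ultrafilter (ν → A))}
    (h : IsGenericList L A (Ds.map fun D => D.map (Subtype.val ∘ ·)) l) {s : Set (ℕ × ν → 𝕄)}
    (hs : A.Definable L s) :
    flatList A l ∈ s ↔ ∀ᶠ m in (tensor Ds : Filter (List (ν → A))),
      flatList A (m.map (Subtype.val ∘ ·)) ∈ s := by
  induction Ds generalizing l s with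
  | nil =>
    cases h
    exact Iff.rfl
  | cons D Ds ih =>
    cases h with
    | @cons _ _ x l hx hl =>
      have hs' := hs.preimage_comp (unconsIndex (ν := ν))
      rw [flatList_cons, eventually_tensor_cons]
      refine (hx.mem_iff
        (definable_fiber hs' subset_union_left (range_flatList_subset l))).trans ?_
      refine eventually_congr (f := (D : Filter (ν → A))) (Eventually.of_forall fun y => ?_)
      refine (ih hl (definable_elim_val hs' y)).trans ?_
      simp only [List.map_cons, flatList_cons]
      exact Iff.rfl

theorem consistent_iff_eventually [Nonempty A] {Φ : Set (ι ⊕ ν → 𝕄)} (hΦ : A.Definable L Φ)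
    {Ds : List (Ultrafilter (ν → A))}
    (h : IsGenericList L A (Ds.map fun D => D.map (Subtype.val ∘ ·)) l) :
    Consistent Φ {x | x ∈ l} ↔ ∀ᶠ m in (tensor Ds : Filter (List (ν → A))),
      Consistent Φ {x | x ∈ m.map (Subtype.val ∘ ·)} := by
  have : Nonempty 𝕄 := Nonempty.map Subtype.val ‹Nonempty A›
  rw [← curry_flatList_image (A := A) l, h.length_eq, List.length_map]
  refine (h.flatList_mem_iff (definable_consistent hΦ (finite_Iio _))).trans ?_
  refine eventually_congr ((eventually_length_tensor Ds).mono fun m hm => ?_)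
  rw [← curry_flatList_image (A := A), List.length_map, hm]
  exact Iff.rfl

end IsGenericList

end GenericLists

section GlobalTypes

open Set Filter

variable {L : FirstOrder.Language.{u, v}} {𝕄 : Type w} [L.Structure 𝕄] {A B : Set 𝕄}
variable {α : Type*}

theorem ParamFormula.realize_subst {γ : Type} (φ : ParamFormula L 𝕄 (α ⊕ γ)) (c : γ → 𝕄)
    (x : α → 𝕄) : (φ.subst c).Realize x ↔ φ.Realize (Sum.elim x c) := by
  unfold ParamFormula.subst ParamFormula.Realize
  rw [Formula.realize_relabel]
  refine iff_of_eq (congrArg _ ?_)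
  ext ((i | i) | i) <;> rfl

namespace GlobalType

variable (L) in
/-- The global type of the formulas that hold eventually along `U`; every global type arises in
this way, see `exists_eq_ofUltrafilter`. -/
def ofUltrafilter (U : Ultrafilter (α → 𝕄)) : GlobalType L 𝕄 α where
  Mem θ := ∀ᶠ x in U, θ.Realize x
  consistent S hS := ((eventually_all_finset S).2 hS).exists
  complete θ := U.em θ.Realize

theorem exists_eq_ofUltrafilter (q : GlobalType L 𝕄 α) : ∃ U, q = ofUltrafilter L U := by
  classical
  obtain ⟨U, hU⟩ := Ultrafilter.exists_ultrafilter_of_finite_inter_nonempty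
    ((fun θ : ParamFormula L 𝕄 α => {x | θ.Realize x}) '' {θ | q.Mem θ}) (fun T hT => by
      obtain ⟨S, hS, rfl⟩ := Finset.subset_set_image_iff.1 hT
      obtain ⟨x, hx⟩ := q.consistent S fun θ hθ => hS hθ
      exact ⟨x, by simpa using hx⟩)
  refine ⟨U, ?_⟩
  have hmem : q.Mem = (ofUltrafilter L U).Mem := by
    ext θ
    refine ⟨fun hθ => hU (mem_image_of_mem _ hθ), fun hθ =>
      (q.complete θ).resolve_right fun hnot => ?_⟩
    exact Ultrafilter.eventually_not.1 (hU (mem_image_of_mem _ hnot)) hθ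
  cases q
  congr

theorem InvariantOver.isInvariantFilter {U : Ultrafilter (α → 𝕄)}
    (h : (ofUltrafilter L U).InvariantOver A) : IsInvariantFilter L A (U : Filter (α → 𝕄)) := by
  intro ζ z z' hz s hs hev
  obtain ⟨θ, hθ, hsθ⟩ := definable_iff_exists_paramFormula.1 (hs.preimage_comp Sum.swap)
  have hmem : ∀ (z : ζ → 𝕄) x, Sum.elim z x ∈ s ↔ (θ.subst z).Realize x := fun z x => by
    rw [θ.realize_subst, ← Sum.elim_swap]
    exact Set.ext_iff.1 hsθ (Sum.elim x z)
  simp only [hmem] at hev ⊢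
  have hz' : TpEq L 𝕄 A (Sum.elim z θ.params) (Sum.elim z' θ.params) := by
    have := hz.elim_comp (Sum.elim Sum.inr fun i => Sum.inl ⟨θ.params i, hθ i⟩)
    rwa [Sum.comp_elim, Sum.comp_elim] at this
  exact (h _ _ _ _ hz').1 hev

theorem invariantOver_ofUltrafilter {U : Ultrafilter (α → 𝕄)}
    (h : IsInvariantFilter L A (U : Filter (α → 𝕄))) : (ofUltrafilter L U).InvariantOver A := by
  intro Q ψ z z' hz
  have hψ : A.Definable L {v : α ⊕ Q → 𝕄 | ψ.Realize v} :=
    (empty_definable_iff.2 ⟨ψ, rfl⟩ : (∅ : Set 𝕄).Definable L _).mono (empty_subset A)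
  have hs := hψ.preimage_comp Sum.swap
  have hev : ∀ {z z' : Q → 𝕄}, TpEq L 𝕄 A z z' → (∀ᶠ x in U, ψ.Realize (Sum.elim x z)) →
      ∀ᶠ x in U, ψ.Realize (Sum.elim x z') := fun hz hev => by
    simpa using h hz hs (by simpa using hev)
  exact ⟨hev hz, hev hz.symm⟩

theorem realizesOver_ofUltrafilter_iff {U : Ultrafilter (α → 𝕄)} {x : α → 𝕄} :
    (ofUltrafilter L U).RealizesOver B x ↔ RealizesLimit L (U : Filter (α → 𝕄)) B x := by
  refine ⟨fun h s hs hU => ?_, fun h θ hθ hB => ?_⟩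
  · obtain ⟨θ, hθ, rfl⟩ := definable_iff_exists_paramFormula.1 hs
    exact h θ hU hθ
  · exact h _ (definable_iff_exists_paramFormula.2 ⟨θ, hB, rfl⟩) hθ

end GlobalType

end GlobalTypes

section MorleySequences

open Set Filter

variable {L : FirstOrder.Language.{u, v}} {𝕄 : Type w} [L.Structure 𝕄] {A : Set 𝕄}
variable {α β : Type*} {ν : Type}

variable (L A) in
/-- Each term of `b` realizes the limit type of `F` over `A` and the previous terms. -/
def IsMorleySequence (F : Filter (α → 𝕄)) (b : ℕ → α → 𝕄) : Prop :=
  ∀ i, RealizesLimit L F (A ∪ ⋃ j ∈ Iio i, range (b j)) (b i)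

theorem isInvMorleyOver_iff {b : ℕ → α → 𝕄} :
    IsInvMorleyOver L 𝕄 A b ↔ ∃ U : Ultrafilter (α → 𝕄),
      IsInvariantFilter L A (U : Filter (α → 𝕄)) ∧ IsMorleySequence L A U b := by
  constructor
  · rintro ⟨q, hq, hb⟩
    obtain ⟨U, rfl⟩ := q.exists_eq_ofUltrafilter
    exact ⟨U, hq.isInvariantFilter, fun i => GlobalType.realizesOver_ofUltrafilter_iff.1 (hb i)⟩
  · rintro ⟨U, hU, hb⟩
    exact ⟨_, GlobalType.invariantOver_ofUltrafilter hU,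
      fun i => GlobalType.realizesOver_ofUltrafilter_iff.2 (hb i)⟩

theorem IsMorleySequence.map_elim_comp {F : Filter (α → 𝕄)} {b : ℕ → α → 𝕄}
    (h : IsMorleySequence L A F b) (f : β → A ⊕ α) :
    IsMorleySequence L A (F.map (Sum.elim Subtype.val · ∘ f))
      fun i => Sum.elim Subtype.val (b i) ∘ f := by
  refine fun i => ((h i).map_elim_comp subset_union_left f).mono (union_subset subset_union_left ?_)
  refine iUnion₂_subset fun j hj => (range_comp_subset_range _ _).trans ?_
  rw [Sum.elim_range, Subtype.range_coe]
  exact union_subset_union_right _ (subset_biUnion_of_mem (u := fun j => range (b j)) hj)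

theorem IsMorleySequence.isGenericList {U : Ultrafilter (ν → 𝕄)} {b : ℕ → ν → 𝕄}
    (h : IsMorleySequence L A (U : Filter (ν → 𝕄)) b) (K : ℕ) :
    IsGenericList L A (List.replicate K U) ((List.range K).reverse.map b) := by
  induction K with
  | zero => exact .nil
  | succ K ih =>
    rw [List.range_succ, List.reverse_append]
    refine .cons ((h K).mono (union_subset_union_right _ (iUnion₂_subset fun y hy => ?_))) ih
    obtain ⟨j, hj, rfl⟩ := List.mem_map.1 hy
    have hj : j < K := by simpa using hj
    exact subset_biUnion_of_mem (u := fun j => range (b j)) hj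

theorem exists_isMorleySequence [Countable ν] (hsat : CountablySaturatedOver L A)
    {U : Ultrafilter (ν → 𝕄)} {x₀ : ν → 𝕄} (hx₀ : RealizesLimit L (U : Filter (ν → 𝕄)) A x₀) :
    ∃ b : ℕ → ν → 𝕄, b 0 = x₀ ∧ IsMorleySequence L A (U : Filter (ν → 𝕄)) b := by
  have hnext : ∀ C : {C : Set 𝕄 // C.Countable}, ∃ x,
      RealizesLimit L (U : Filter (ν → 𝕄)) (A ∪ C) x := fun C => hsat C.1 C.2 _
  choose next hnext using hnext
  let s : ℕ → {C : Set 𝕄 // C.Countable} × (ν → 𝕄) := fun i => Nat.rec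
    (⟨∅, countable_empty⟩, x₀)
    (fun _ p => let C := ⟨p.1 ∪ range p.2, p.1.2.union (countable_range _)⟩; (C, next C)) i
  have hs : ∀ i, ((s i).1 : Set 𝕄) = ⋃ j ∈ Iio i, range (s j).2 := by
    intro i
    induction i with
    | zero => simp [s]
    | succ i ih =>
      rw [← Order.succ_eq_add_one, Order.Iio_succ_eq_insert, biUnion_insert, union_comm, ← ih]
      rfl
  refine ⟨fun i => (s i).2, rfl, fun i => ?_⟩
  rw [← hs]
  cases i with
  | zero => exact (union_empty A).symm ▸ hx₀
  | succ i => exact hnext _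

end MorleySequences

section TwinArrays

open Set Filter

variable {L : FirstOrder.Language.{u, v}} {𝕄 : Type w} [L.Structure 𝕄] {A : Set 𝕄}
variable {ι ν : Type}

/-- The coordinates of the entry `ε` in row `i` of an array, preceded by those of all earlier
rows. -/
def rowIndex (i : ℕ) (ε : Bool) : (Fin i × Bool) × ν ⊕ ν → (ℕ × Bool) × ν :=
  Sum.elim (Prod.map (Prod.map Fin.val id) id) (Prod.mk (i, ε))

variable (L A) in
/-- The first `N` rows of the two-column array `c` consist of realizations of the type of `a₀`
over `A`, and the two entries of each of them have the same type over the earlier rows. -/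
structure IsTwinArray (a₀ : ν → 𝕄) (N : ℕ) (c : ℕ × Bool → ν → 𝕄) : Prop where
  tpEq : ∀ i < N, ∀ ε, TpEq L 𝕄 A a₀ (c (i, ε))
  tpEq_row : ∀ i < N, TpEq L 𝕄 A (flat c ∘ rowIndex i false) (flat c ∘ rowIndex i true)

theorem IsTwinArray.comp {a₀ : ν → 𝕄} {N N' : ℕ} {c : ℕ × Bool → ν → 𝕄}
    (h : IsTwinArray L A a₀ N c) {g : ℕ → ℕ} (hg : StrictMono g) (hN : ∀ i < N', g i < N) :
    IsTwinArray L A a₀ N' (c ∘ Prod.map g id) := by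
  refine ⟨fun i hi ε => h.tpEq _ (hN i hi) ε, fun i hi => ?_⟩
  let e : (Fin i × Bool) × ν ⊕ ν → (Fin (g i) × Bool) × ν ⊕ ν :=
    Sum.map (Prod.map (Prod.map (fun j => ⟨g j, hg j.2⟩) id) id) id
  have he : ∀ ε, flat (c ∘ Prod.map g id) ∘ rowIndex i ε = (flat c ∘ rowIndex (g i) ε) ∘ e := by
    intro ε
    ext (q | q) <;> rfl
  rw [he, he]
  exact (h.tpEq_row _ (hN i hi)).comp e

theorem RealizesLimit.isTwinArray {F : Filter ((ℕ × Bool) × ν → 𝕄)} {v : (ℕ × Bool) × ν → 𝕄}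
    (hv : RealizesLimit L F A v) {a₀ : ν → 𝕄} {N : ℕ}
    (h : ∀ i < N, ∀ ε, ∀ s, A.Definable L s → a₀ ∈ s → ∀ᶠ w in F, w ∘ Prod.mk (i, ε) ∈ s)
    (hrow : ∀ i < N, ∀ s, A.Definable L s →
      ∀ᶠ w in F, w ∘ rowIndex i false ∈ s → w ∘ rowIndex i true ∈ s) :
    IsTwinArray L A a₀ N (Function.curry v) where
  tpEq i hi ε := tpEq_of_imp fun s hs ha => hv _ (hs.preimage_comp _) (h i hi ε s hs ha)
  tpEq_row i hi := tpEq_of_imp fun s hs =>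
    hv _ ((hs.preimage_comp _).himp (hs.preimage_comp _)) (hrow i hi s hs)

/-- The indices of the path that runs through the right entries of the rows below `l` and the left
entries of the `N` rows from row `s` on. -/
def pathIndices (l s N : ℕ) : Set (ℕ × Bool) :=
  Iio l ×ˢ {true} ∪ Ico s (s + N) ×ˢ {false}

theorem finite_pathIndices (l s N : ℕ) : (pathIndices l s N).Finite :=
  ((finite_Iio l).prod (finite_singleton _)).union ((finite_Ico _ _).prod (finite_singleton _))

theorem pathIndices_mono (l s : ℕ) {N N' : ℕ} (h : N ≤ N') :
    pathIndices l s N ⊆ pathIndices l s N' :=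
  union_subset_union_right _ (prod_mono_left (Ico_subset_Ico_right (by omega)))

variable (L A) in
/-- A twin array of length `l + N` with `K`-inconsistent right column but consistent path along the
first `l` right and the next `N` left entries. -/
structure IsPathArray (a₀ : ν → 𝕄) (Φ : Set (ι ⊕ ν → 𝕄)) (K l N : ℕ) (c : ℕ × Bool → ν → 𝕄) :
    Prop extends IsTwinArray L A a₀ (l + N) c where
  inconsistent : ∀ t : Finset ℕ, (∀ i ∈ t, i < l + N) → t.card = K →
    ¬Consistent Φ (c '' ((t : Set ℕ) ×ˢ {true}))
  consistent : Consistent Φ (c '' pathIndices l l N)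

theorem not_isPathArray_self {a₀ : ν → 𝕄} {Φ : Set (ι ⊕ ν → 𝕄)} {K : ℕ} {c : ℕ × Bool → ν → 𝕄} :
    ¬IsPathArray L A a₀ Φ K K 0 c := by
  intro h
  refine h.inconsistent (Finset.range K) (fun i hi => Finset.mem_range.1 hi)
    (Finset.card_range K) (h.consistent.mono (image_mono ?_))
  rw [Finset.coe_range]
  exact subset_union_left

theorem exists_maximal_isPathArray {a₀ : ν → 𝕄} {Φ : Set (ι ⊕ ν → 𝕄)} {K : ℕ}
    (h : ∀ N, ∃ c, IsPathArray L A a₀ Φ K 0 N c) :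
    ∃ l, (∀ N, ∃ c, IsPathArray L A a₀ Φ K l N c) ∧
      ∃ N, ∀ c, ¬IsPathArray L A a₀ Φ K (l + 1) N c := by
  by_contra! hsucc
  obtain ⟨c, hc⟩ := Nat.rec (motive := fun l => ∀ N, ∃ c, IsPathArray L A a₀ Φ K l N c) h hsucc K 0
  exact not_isPathArray_self hc

/-- Enumerates the rows below `l`, then row `f`, then the rows from row `s` on. -/
def skipRows (l f s i : ℕ) : ℕ :=
  if i < l then i else if i = l then f else s + (i - l - 1)

theorem strictMono_skipRows {l f s : ℕ} (hf : l ≤ f) (hs : f < s) :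
    StrictMono (skipRows l f s) := by
  refine strictMono_nat_of_lt_succ fun i => ?_
  simp only [skipRows]
  split_ifs <;> omega

theorem skipRows_mem_of_mem_pathIndices {l f s N : ℕ} {p : ℕ × Bool}
    (hp : p ∈ pathIndices (l + 1) (l + 1) N) :
    Prod.map (skipRows l f s) id p ∈ insert (f, true) (pathIndices l s N) := by
  obtain ⟨i, ε⟩ := p
  simp only [pathIndices, mem_union, mem_prod, mem_Iio, mem_Ico, mem_singleton_iff, mem_insert_iff,
    Prod.map_apply, id_eq, Prod.mk.injEq, skipRows] at hp ⊢
  grind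

theorem IsPathArray.not_consistent_insert {a₀ : ν → 𝕄} {Φ : Set (ι ⊕ ν → 𝕄)} {K l N N' : ℕ}
    {c : ℕ × Bool → ν → 𝕄} (hc : IsPathArray L A a₀ Φ K l N c)
    (hN' : ∀ c, ¬IsPathArray L A a₀ Φ K (l + 1) N' c) {f s : ℕ} (hf : l ≤ f) (hs : f < s)
    (hN : s + N' ≤ l + N) : ¬Consistent Φ (c '' insert (f, true) (pathIndices l s N')) := by
  intro hcons
  let g := skipRows l f s
  have hg : StrictMono g := strictMono_skipRows hf hs
  have hlt : ∀ i < l + 1 + N', g i < l + N := by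
    intro i hi
    simp only [g, skipRows]
    split_ifs <;> omega
  refine hN' (c ∘ Prod.map g id) ⟨hc.toIsTwinArray.comp hg hlt, fun t ht hcard h => ?_,
    hcons.mono ?_⟩
  · refine hc.inconsistent (t.map ⟨g, hg.injective⟩) (by simpa using fun i hi => hlt i (ht i hi))
      (by rw [Finset.card_map, hcard]) (h.mono ?_)
    rw [image_comp, prodMap_image_prod, image_id, Finset.coe_map]
    exact subset_rfl
  · rw [image_comp]
    exact image_mono (image_subset_iff.2 fun p => skipRows_mem_of_mem_pathIndices)

theorem exists_limit_isTwinArray [Nonempty 𝕄] [Countable ν] (hsat : CountablySaturatedOver L A)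
    {a₀ : ν → 𝕄} {Φ : Set (ι ⊕ ν → 𝕄)} (hΦ : A.Definable L Φ) {K : ℕ}
    (h : ∀ N, ∃ c, IsPathArray L A a₀ Φ K 0 N c) :
    ∃ (l N₀ : ℕ) (c : ℕ × Bool → ν → 𝕄), (∀ N, IsTwinArray L A a₀ N c) ∧
      (∀ N, Consistent Φ (c '' pathIndices l l N)) ∧
      ∀ f s, l ≤ f → f < s → ¬Consistent Φ (c '' insert (f, true) (pathIndices l s N₀)) := by
  obtain ⟨l, hl, N₀, hN₀⟩ := exists_maximal_isPathArray h
  choose c hc using hl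
  obtain ⟨v, hv⟩ := hsat ∅ countable_empty (map (fun N => flat (c N)) atTop)
  rw [union_empty] at hv
  have eventually_c : ∀ {P : ((ℕ × Bool) × ν → 𝕄) → Prop} (N₁), (∀ N ≥ N₁, P (flat (c N))) →
      ∀ᶠ w in map (fun N => flat (c N)) atTop, P w :=
    fun N₁ hP => eventually_map.2 (eventually_atTop.2 ⟨N₁, hP⟩)
  refine ⟨l, N₀, Function.curry v, fun N => hv.isTwinArray ?_ ?_, fun N => ?_, fun f s hf hs => ?_⟩
  · exact fun i _ ε s hs ha => eventually_c (i + 1) fun N hN =>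
      (((hc N).tpEq i (by omega) ε).mem_iff hs).1 ha
  · exact fun i _ s hs => eventually_c (i + 1) fun N hN =>
      (((hc N).tpEq_row i (by omega)).mem_iff hs).1
  · exact hv _ (definable_consistent hΦ (finite_pathIndices l l N)) (eventually_c N fun N' hN' =>
      (hc N').consistent.mono (image_mono (pathIndices_mono l l hN')))
  · exact hv _ (definable_consistent hΦ ((finite_pathIndices l s N₀).insert _)).compl
      (eventually_c (s + N₀) fun N hN => (hc N).not_consistent_insert hN₀ hf hs (by omega))

end TwinArrays

section SOPTrees

open Set Filter

variable {L : FirstOrder.Language.{u, v}} {𝕄 : Type w} [L.Structure 𝕄] {A : Set 𝕄}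
variable {ι ν : Type}

variable (L A) in
/-- An SOP₁ pattern for `Φ` whose nodes are finite tuples of realizations of the type of `a₀`
over `A`. -/
def HasSOP1Tree (a₀ : ν → 𝕄) (Φ : Set (ι ⊕ ν → 𝕄)) : Prop :=
  ∃ (Q : Type) (_ : Finite Q) (T : List Bool → Q → ν → 𝕄), (∀ η q, TpEq L 𝕄 A a₀ (T η q)) ∧
    (∀ η, Consistent Φ (⋃ η' ∈ {η' | η' <+: η}, range (T η'))) ∧
    ∀ η₁ η₂, η₁ ++ [false] <+: η₂ →
      ¬Consistent Φ (range (T η₂) ∪ range (T (η₁ ++ [true])))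

theorem IsTwinArray.exists_twist [Nonempty 𝕄] [Countable ν] (hsat : CountablySaturatedOver L A)
    {a₀ : ν → 𝕄} {c d : ℕ × Bool → ν → 𝕄} (hc : ∀ N, IsTwinArray L A a₀ N c)
    (hd : TpEq L 𝕄 A (flat d) (flat c)) (f : ℕ) :
    ∃ d', TpEq L 𝕄 A (flat d') (flat c) ∧ (∀ i < f, ∀ ε, d' (i, ε) = d (i, ε)) ∧
      d' (f, false) = d (f, true) := by
  have hrow : TpEq L 𝕄 A (flat c ∘ rowIndex f false) (flat d ∘ rowIndex f true) :=
    ((hc (f + 1)).tpEq_row f (Nat.lt_succ_self f)).trans (hd.comp _).symm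
  obtain ⟨v, hv⟩ := hrow.exists_elim hsat (flat c)
  refine ⟨Function.curry v, (hv.comp Sum.inr).symm, fun i hi ε => ?_, ?_⟩ <;> funext j
  · exact hv.apply_eq (i := Sum.inr ((i, ε), j)) (j := Sum.inl (Sum.inl ((⟨i, hi⟩, ε), j))) rfl
  · exact hv.apply_eq (i := Sum.inr ((f, false), j)) (j := Sum.inl (Sum.inr j)) rfl

/-- Turning right at `η` replaces the array by a conjugate that has the same rows below
`pos η.length`, and whose left entry in that row is the old right entry. -/
theorem IsTwinArray.exists_tree [Nonempty 𝕄] [Countable ν] (hsat : CountablySaturatedOver L A)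
    {a₀ : ν → 𝕄} {c : ℕ × Bool → ν → 𝕄} (hc : ∀ N, IsTwinArray L A a₀ N c) {pos : ℕ → ℕ}
    (hpos : StrictMono pos) :
    ∃ C : List Bool → ℕ × Bool → ν → 𝕄, (∀ η, TpEq L 𝕄 A (flat (C η)) (flat c)) ∧
      (∀ η η', η <+: η' → ∀ i < pos η.length, ∀ ε, C η' (i, ε) = C η (i, ε)) ∧
      ∀ η η', η ++ [false] <+: η' →
        C η' (pos η.length, true) = C (η ++ [true]) (pos η.length, false) := by
  choose step hstep hstep_lt hstep_eq using
    fun d : {d // TpEq L 𝕄 A (flat d) (flat c)} => IsTwinArray.exists_twist hsat hc d.2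
  let R : List Bool → {d // TpEq L 𝕄 A (flat d) (flat c)} := fun t =>
    t.rec ⟨c, TpEq.refl _⟩ fun b t d => if b then ⟨step d (pos t.length), hstep d _⟩ else d
  let C : List Bool → ℕ × Bool → ν → 𝕄 := fun η => (R η.reverse).1
  have C_append_false : ∀ η, C (η ++ [false]) = C η := fun η => by
    simp only [C, List.reverse_append]
    rfl
  have C_append_true : ∀ η, C (η ++ [true]) = step (R η.reverse) (pos η.length) := fun η => by
    simp only [C, List.reverse_append, ← η.length_reverse]
    rfl
  have C_agree : ∀ η η', η <+: η' → ∀ i < pos η.length, ∀ ε, C η' (i, ε) = C η (i, ε) := by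
    rintro η _ ⟨t, rfl⟩ i hi ε
    induction t using List.reverseRecOn with
    | nil => rw [List.append_nil]
    | append_singleton t b ih =>
      rw [← ih, ← List.append_assoc]
      cases b
      · rw [C_append_false]
      · rw [C_append_true]
        refine hstep_lt _ _ i (hi.trans_le (hpos.monotone ?_)) ε
        rw [List.length_append]
        exact Nat.le_add_right _ _
  refine ⟨C, fun η => (R η.reverse).2, C_agree, fun η η' h => ?_⟩
  rw [C_agree _ _ h _ (hpos (by simp)), C_append_false, C_append_true, hstep_eq]

/-- The indices of the array entries that form the `n`-th level of an SOP₁ tree: the initial right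
entries and a block of left entries. -/
def blockIndex (l b n : ℕ) : Fin l ⊕ Fin b → ℕ × Bool :=
  Sum.elim (fun i => (i, true)) fun i => (l + b * n + i, false)

theorem fst_blockIndex_lt (l b n : ℕ) (q : Fin l ⊕ Fin b) :
    (blockIndex l b n q).1 < l + b * (n + 1) := by
  rcases q with i | i
  · exact i.2.trans_le (Nat.le_add_right _ _)
  · rw [Nat.mul_succ, ← Nat.add_assoc]
    exact Nat.add_lt_add_left i.2 _

theorem blockIndex_mem_pathIndices {l b n m : ℕ} (h : n < m) (q : Fin l ⊕ Fin b) :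
    blockIndex l b n q ∈ pathIndices l l (b * m) := by
  have hlt := (fst_blockIndex_lt l b n q).trans_le (Nat.add_le_add_left (Nat.mul_le_mul_left b h) l)
  rcases q with i | i
  · exact Or.inl ⟨i.2, rfl⟩
  · exact Or.inr ⟨⟨(Nat.le_add_right _ _).trans (Nat.le_add_right _ _), hlt⟩, rfl⟩

theorem pathIndices_subset_range_blockIndex (l N n : ℕ) :
    pathIndices l (l + (N + 1) * n + 1) N ⊆ range (blockIndex l (N + 1) n) := by
  rintro p (⟨hi, hε⟩ | ⟨⟨hi, hi'⟩, hε⟩)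
  · exact ⟨Sum.inl ⟨p.1, hi⟩, Prod.ext rfl hε.symm⟩
  · exact ⟨Sum.inr ⟨p.1 - (l + (N + 1) * n), by omega⟩,
      Prod.ext (Nat.add_sub_cancel' (by omega)) hε.symm⟩

theorem hasSOP1Tree_of_isPathArray [Nonempty 𝕄] [Countable ν] (hsat : CountablySaturatedOver L A)
    {a₀ : ν → 𝕄} {Φ : Set (ι ⊕ ν → 𝕄)} (hΦ : A.Definable L Φ) {K : ℕ}
    (h : ∀ N, ∃ c, IsPathArray L A a₀ Φ K 0 N c) : HasSOP1Tree L A a₀ Φ := by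
  obtain ⟨l, N, c, hc, hcons, hincons⟩ := exists_limit_isTwinArray hsat hΦ h
  have hpos : StrictMono fun n => l + (N + 1) * n := fun m n hmn =>
    Nat.add_lt_add_left (Nat.mul_lt_mul_of_pos_left hmn N.succ_pos) l
  obtain ⟨C, hC, hC_agree, hC_twist⟩ := IsTwinArray.exists_tree hsat hc
    (hpos.comp (strictMono_id.add_const 1))
  let node : ℕ → Fin l ⊕ Fin (N + 1) → ℕ × Bool := blockIndex l (N + 1)
  refine ⟨_, inferInstance, fun η => C η ∘ node η.length, fun η q => ?_, fun η => ?_,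
    fun η₁ η₂ hη hcons₂ => ?_⟩
  · exact ((hc _).tpEq _ (Nat.lt_succ_self (node η.length q).1) (node η.length q).2).trans
      ((hC η).comp (Prod.mk (node η.length q))).symm
  · refine (((hC η).consistent_iff hΦ (finite_pathIndices l l _)).2
      (hcons ((N + 1) * (η.length + 1)))).mono (iUnion₂_subset fun η' hη' => ?_)
    rintro _ ⟨q, rfl⟩
    exact ⟨node η'.length q, blockIndex_mem_pathIndices (Nat.lt_succ_of_le hη'.length_le) q,
      hC_agree _ _ hη' _ (fst_blockIndex_lt _ _ _ q) _⟩
  · have hle : η₁.length + 1 ≤ η₂.length := by simpa using hη.length_le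
    refine hincons _ _ (Nat.le_add_right _ _) (Nat.lt_succ_of_le (hpos.monotone hle))
      (((hC η₂).consistent_iff hΦ ((finite_pathIndices _ _ _).insert _)).1 (hcons₂.mono ?_))
    rw [image_insert_eq]
    refine insert_subset (Or.inr ⟨Sum.inr 0, ?_⟩) (subset_union_of_subset_left ?_ _)
    · have hnode : node (η₁ ++ [true]).length (Sum.inr 0) =
          (l + (N + 1) * (η₁.length + 1), false) := by simp [node, blockIndex]
      exact (congrArg _ hnode).trans (hC_twist _ _ hη).symm
    · rw [range_comp]
      exact image_mono (pathIndices_subset_range_blockIndex _ _ _)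

end SOPTrees

section TwoUltrafilters

open Set Filter

variable {L : FirstOrder.Language.{u, v}} {𝕄 : Type w} [L.Structure 𝕄] {A : Set 𝕄}
variable {ι ν : Type}

/-- The array with first row `x`, followed by the rows of `c`. -/
def consRow (x : Bool → ν → 𝕄) (c : ℕ × Bool → ν → 𝕄) : ℕ × Bool → ν → 𝕄
  | (0, ε) => x ε
  | (i + 1, ε) => c (i, ε)

/-- The first `N` entries in column `ε` of an array. -/
def column (c : ℕ × Bool → ν → 𝕄) (ε : Bool) (N : ℕ) : List (ν → 𝕄) :=
  (List.range N).map fun i => c (i, ε)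

theorem column_consRow (x : Bool → ν → 𝕄) (c : ℕ × Bool → ν → 𝕄) (ε : Bool) (N : ℕ) :
    column (consRow x c) ε (N + 1) = x ε :: column c ε N := by
  rw [column, List.range_succ_eq_map, List.map_cons, List.map_map]
  rfl

theorem biUnion_range_subset_of_sublist_column {c : ℕ × Bool → ν → 𝕄} {ε : Bool} {N : ℕ}
    {l : List (ν → 𝕄)} (h : l.Sublist (column c ε N)) :
    ⋃ y ∈ l, range y ⊆ range (flat c) := by
  refine iUnion₂_subset fun y hy => ?_
  obtain ⟨i, -, rfl⟩ := List.mem_map.1 (h.subset hy)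
  rintro _ ⟨j, rfl⟩
  exact ⟨((i, ε), j), rfl⟩

/-- Separates the two entries of the first row from the coordinates picked by `rowIndex`. -/
def unconsRowIndex (i : ℕ) :
    (Fin (i + 1) × Bool) × ν ⊕ ν → (((Fin i × Bool) × ν ⊕ ν) ⊕ ν) ⊕ ν
  | Sum.inl ((⟨0, _⟩, false), j) => Sum.inl (Sum.inr j)
  | Sum.inl ((⟨0, _⟩, true), j) => Sum.inr j
  | Sum.inl ((⟨k + 1, hk⟩, ε), j) =>
    Sum.inl (Sum.inl (Sum.inl ((⟨k, Nat.lt_of_succ_lt_succ hk⟩, ε), j)))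
  | Sum.inr j => Sum.inl (Sum.inl (Sum.inr j))

theorem flat_consRow_comp_rowIndex (x : Bool → ν → 𝕄) (c : ℕ × Bool → ν → 𝕄) (i : ℕ) (ε : Bool) :
    flat (consRow x c) ∘ rowIndex (i + 1) ε =
      Sum.elim (Sum.elim (flat c ∘ rowIndex i ε) (x false)) (x true) ∘ unconsRowIndex i := by
  ext (⟨⟨⟨_ | k, hk⟩, _ | _⟩, j⟩ | j) <;> rfl

theorem IsTwinArray.isTwinArray_consRow {a₀ : ν → 𝕄} {N : ℕ} {c : ℕ × Bool → ν → 𝕄}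
    (hc : IsTwinArray L A a₀ N c) {D U : Ultrafilter (ν → 𝕄)}
    (hD : IsInvariantFilter L A (D : Filter (ν → 𝕄)))
    (hDa : (D : Filter (ν → 𝕄)) ≤ typeFilter L A a₀)
    (hU : IsInvariantFilter L A (U : Filter (ν → 𝕄)))
    (hUa : (U : Filter (ν → 𝕄)) ≤ typeFilter L A a₀)
    {x : Bool → ν → 𝕄} (hx : RealizesLimit L (D : Filter (ν → 𝕄)) (A ∪ range (flat c)) (x false))
    (hx' : RealizesLimit L (U : Filter (ν → 𝕄)) (A ∪ (range (flat c) ∪ range (x false))) (x true)) :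
    IsTwinArray L A a₀ (N + 1) (consRow x c) := by
  have hxa : ∀ ε, TpEq L 𝕄 A a₀ (x ε) := by
    rintro (_ | _)
    exacts [(hx.mono subset_union_left).tpEq hDa, (hx'.mono subset_union_left).tpEq hUa]
  refine ⟨?_, ?_⟩
  · rintro (_ | i) hi ε
    exacts [hxa ε, hc.tpEq i (Nat.lt_of_succ_lt_succ hi) ε]
  · rintro (_ | i) hi
    · have he : ∀ ε, flat (consRow x c) ∘ rowIndex 0 ε =
          x ε ∘ Sum.elim (fun q : (Fin 0 × Bool) × ν => q.1.1.elim0) id := by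
        intro ε
        ext (q | q)
        exacts [q.1.1.elim0, rfl]
      rw [he, he]
      exact ((hxa false).symm.trans (hxa true)).comp _
    · rw [flat_consRow_comp_rowIndex, flat_consRow_comp_rowIndex]
      have hsub : ∀ ε, range (flat c ∘ rowIndex i ε) ⊆ range (flat c) :=
        fun ε => range_comp_subset_range _ _
      have hsub' : ∀ ε, range (Sum.elim (flat c ∘ rowIndex i ε) (x false)) ⊆
          range (flat c) ∪ range (x false) :=
        fun ε => (Sum.elim_range _ _).trans_subset (union_subset_union_left _ (hsub ε))
      refine TpEq.comp (hU.tpEq_elim (hD.tpEq_elim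
        (hc.tpEq_row i (Nat.lt_of_succ_lt_succ hi)) ?_ ?_ ?_ ?_ hx hx) ?_ ?_ ?_ ?_ hx' hx') _
      all_goals first
        | exact subset_union_left
        | exact (hsub _).trans subset_union_right
        | exact (hsub' _).trans subset_union_right

theorem exists_isTwinArray_isGenericList [Countable ν] (hsat : CountablySaturatedOver L A)
    [Nonempty A] {a₀ : ν → 𝕄} {U : Ultrafilter (ν → 𝕄)}
    (hU : IsInvariantFilter L A (U : Filter (ν → 𝕄)))
    (hUa : (U : Filter (ν → 𝕄)) ≤ typeFilter L A a₀)
    (Ds : List (Ultrafilter (ν → 𝕄)))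
    (hDs : ∀ D ∈ Ds, IsInvariantFilter L A (D : Filter (ν → 𝕄)) ∧
      (D : Filter (ν → 𝕄)) ≤ typeFilter L A a₀) :
    ∃ c : ℕ × Bool → ν → 𝕄, IsTwinArray L A a₀ Ds.length c ∧
      IsGenericList L A Ds (column c false Ds.length) ∧
      ∀ l : List (ν → 𝕄), l.Sublist (column c true Ds.length) →
        IsGenericList L A (List.replicate l.length U) l := by
  induction Ds with
  | nil =>
    refine ⟨fun _ _ => (Classical.arbitrary A : A), ⟨by simp, by simp⟩, .nil, fun l hl => ?_⟩
    obtain rfl := List.sublist_nil.1 hl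
    exact .nil
  | cons D Ds ih =>
    obtain ⟨⟨hD, hDa⟩, hDs⟩ := List.forall_mem_cons.1 hDs
    obtain ⟨c, hc, hfalse, htrue⟩ := ih hDs
    have hcount := countable_range (flat c)
    obtain ⟨x₀, hx₀⟩ := hsat _ hcount (D : Filter (ν → 𝕄))
    obtain ⟨x₁, hx₁⟩ := hsat _ (hcount.union (countable_range x₀)) (U : Filter (ν → 𝕄))
    let x : Bool → ν → 𝕄 := fun ε => bif ε then x₁ else x₀
    refine ⟨consRow x c, hc.isTwinArray_consRow (x := x) hD hDa hU hUa hx₀ hx₁, ?_, fun l hl => ?_⟩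
    · rw [List.length_cons, column_consRow]
      exact .cons (hx₀.mono (union_subset_union_right _
        (biUnion_range_subset_of_sublist_column (List.Sublist.refl _)))) hfalse
    · rw [List.length_cons, column_consRow] at hl
      cases hl with
      | cons _ hl => exact htrue l hl
      | cons_cons _ hl =>
        exact .cons (hx₁.mono (union_subset_union_right _
          ((biUnion_range_subset_of_sublist_column hl).trans subset_union_left))) (htrue _ hl)

theorem exists_sublist_column (c : ℕ × Bool → ν → 𝕄) (ε : Bool) {N : ℕ} {t : Finset ℕ}
    (ht : ∀ i ∈ t, i < N) :
    ∃ l : List (ν → 𝕄), l.Sublist (column c ε N) ∧ l.length = t.card ∧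
      {x | x ∈ l} = c '' ((t : Set ℕ) ×ˢ {ε}) := by
  refine ⟨((List.range N).filter (· ∈ t)).map fun i => c (i, ε), List.filter_sublist.map _, ?_, ?_⟩
  · rw [List.length_map, ← List.toFinset_card_of_nodup (List.nodup_range.filter _)]
    congr 1
    ext i
    simpa using ht i
  · ext y
    simp only [mem_ofPred_eq, List.mem_map, List.mem_filter, List.mem_range, decide_eq_true_eq]
    refine ⟨fun ⟨i, hi, h⟩ => ⟨(i, ε), ⟨hi.2, rfl⟩, h⟩, ?_⟩
    rintro ⟨⟨i, _⟩, ⟨hi, rfl⟩, h⟩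
    exact ⟨i, ⟨ht i hi, hi⟩, h⟩

theorem exists_forall_eventually_not_consistent [Countable ν]
    (hsat : CountablySaturatedOver L A) [Nonempty A] {a₀ : ν → 𝕄} {Φ : Set (ι ⊕ ν → 𝕄)}
    (hΦ : A.Definable L Φ) (htree : ¬HasSOP1Tree L A a₀ Φ) {U : Ultrafilter (ν → 𝕄)}
    (hU : IsInvariantFilter L A (U : Filter (ν → 𝕄)))
    (hUa : (U : Filter (ν → 𝕄)) ≤ typeFilter L A a₀)
    {K : ℕ} (hK : ∀ l, IsGenericList L A (List.replicate K U) l → ¬Consistent Φ {x | x ∈ l}) :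
    ∃ K', ∀ Ds : List (Ultrafilter (ν → A)), Ds.length = K' →
      (∀ D ∈ Ds, (D : Filter (ν → A)) ≤ traceFilter L A a₀) →
      ∀ᶠ m in (tensor Ds : Filter (List (ν → A))),
        ¬Consistent Φ {x | x ∈ m.map (Subtype.val ∘ ·)} := by
  have : Nonempty 𝕄 := Nonempty.map Subtype.val ‹Nonempty A›
  by_contra! hcon
  refine htree (hasSOP1Tree_of_isPathArray hsat hΦ (K := K) fun N => ?_)
  obtain ⟨Ds, rfl, hDs, hev⟩ := hcon N
  obtain ⟨c, hc, hfalse, htrue⟩ := exists_isTwinArray_isGenericList hsat hU hUa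
    (Ds.map fun D => D.map (Subtype.val ∘ ·)) (List.forall_mem_map.2 fun D hD =>
      ⟨isInvariantFilter_map_val (D : Filter (ν → A)),
        (map_le_iff_le_comap (f := (D : Filter (ν → A)))).2 (hDs D hD)⟩)
  rw [List.length_map] at hc hfalse htrue
  refine ⟨c, ⟨by rwa [zero_add], fun t ht hcard => ?_, ?_⟩⟩
  · rw [zero_add] at ht
    obtain ⟨l, hl, hlen, hset⟩ := exists_sublist_column c true ht
    rw [← hset]
    exact hK l (hcard ▸ hlen ▸ htrue l hl)
  · have hcons := (hfalse.consistent_iff_eventually hΦ).2 hev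
    refine hcons.mono (image_subset_iff.2 ?_)
    rintro ⟨i, ε⟩ (⟨hi, -⟩ | ⟨⟨-, hi⟩, rfl⟩)
    · exact absurd hi (Nat.not_lt_zero i)
    · exact List.mem_map.2 ⟨i, by simpa using hi, rfl⟩

end TwoUltrafilters

section Trees

open Filter

variable {A B Y : Type*}

theorem exists_ultrafilter_prod {R : A → Y → Prop} {𝒮 : Filter A} {T : Filter Y} [T.NeBot]
    (h : ∀ S ∈ 𝒮, ∀ᶠ l in T, ∃ a ∈ S, R a l) :
    ∃ W : Ultrafilter (A × Y), Tendsto Prod.fst (W : Filter (A × Y)) 𝒮 ∧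
      Tendsto Prod.snd (W : Filter (A × Y)) T ∧ ∀ᶠ w in (W : Filter (A × Y)), R w.1 w.2 := by
  have hne : (𝒮 ×ˢ T ⊓ 𝓟 {w | R w.1 w.2}).NeBot := by
    rw [inf_principal_neBot_iff]
    intro U hU
    obtain ⟨S, hS, V, hV, hSV⟩ := mem_prod_iff.1 hU
    obtain ⟨l, hl, a, ha, hal⟩ := (Eventually.and hV (h S hS)).exists
    exact ⟨(a, l), hSV ⟨ha, hl⟩, hal⟩
  have hle := Ultrafilter.of_le (𝒮 ×ˢ T ⊓ 𝓟 {w | R w.1 w.2})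
  exact ⟨Ultrafilter.of (𝒮 ×ˢ T ⊓ 𝓟 {w | R w.1 w.2}),
    tendsto_fst.mono_left (hle.trans inf_le_left), tendsto_snd.mono_left (hle.trans inf_le_left),
    hle (mem_inf_of_right (mem_principal_self _))⟩

theorem exists_sublist_pair_eq {Q X : Type*} [Finite Q] {l : List X} (hl : Nat.card Q < l.length)
    (f : X → Q) : ∃ x y, [x, y].Sublist l ∧ f x = f y := by
  by_contra! hne
  have hnodup : (l.map f).Nodup :=
    List.pairwise_map.2 (List.pairwise_iff_forall_sublist.2 fun {x y} => hne x y)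
  have := Fintype.ofFinite Q
  have hcard := hnodup.length_le_card
  rw [List.length_map, ← Nat.card_eq_fintype_card] at hcard
  exact hl.not_ge hcard

/-- Finite trees with vertices labelled in `A` and an additional label in `B` at each leaf. -/
inductive LeafTree (A B : Type*)
  | leaf (a : A) (b : B)
  | node (a : A) (ts : List (LeafTree A B))

namespace LeafTree

/-- The label of the root. -/
def root : LeafTree A B → A
  | leaf a _ => a
  | node a _ => a

/-- The labels in `B` of the leaves, from left to right. -/
def leaves : LeafTree A B → List B
  | leaf _ b => [b]
  | node _ ts => ts.flatMap leaves

/-- `IsBranch t c b`: following a branch of `t` down to the leaf label `b`, and choosing at each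
node along it a child to the left of the branch, `c` lists the pairs of labels (child on the
branch, chosen child). -/
inductive IsBranch : LeafTree A B → List (A × A) → B → Prop
  | leaf (a : A) (b : B) : IsBranch (leaf a b) [] b
  | node {a : A} {b : B} {ts : List (LeafTree A B)} {t t' : LeafTree A B} {c : List (A × A)}
      (hts : [t', t].Sublist ts) (hb : IsBranch t c b) :
      IsBranch (node a ts) ((root t, root t') :: c) b

/-- `t` is an `r`-branching tree of height `N` with labels in `S` such that the label of each
vertex is `R`-related to the labels of all leaves above it. -/
inductive IsGood (R : A → B → Prop) (S : Set A) (r : ℕ) : ℕ → LeafTree A B → Prop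
  | leaf {a : A} {b : B} (ha : a ∈ S) (hR : R a b) : IsGood R S r 0 (leaf a b)
  | node {N : ℕ} {a : A} {ts : List (LeafTree A B)} (ha : a ∈ S)
      (hR : ∀ b ∈ (node a ts).leaves, R a b) (hr : ts.length = r)
      (hts : ∀ t ∈ ts, IsGood R S r N t) : IsGood R S r (N + 1) (node a ts)

variable {R : A → B → Prop} {S : Set A} {r N : ℕ}

theorem IsGood.root_mem {t : LeafTree A B} (ht : IsGood R S r N t) : t.root ∈ S := by
  cases ht <;> assumption

theorem IsGood.rel_root {t : LeafTree A B} (ht : IsGood R S r N t) {b : B} (hb : b ∈ t.leaves) :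
    R t.root b := by
  cases ht with
  | leaf _ hR =>
    obtain rfl : b = _ := by simpa [leaves] using hb
    exact hR
  | node _ hR _ _ => exact hR b hb

theorem IsGood.exists_isBranch_monochromatic {Q : Type*} [Finite Q] (hr : Nat.card Q < r)
    {t : LeafTree A B} (ht : IsGood R S r N t) (color : List (A × A) → A → Q) :
    ∃ c b, IsBranch t c b ∧ b ∈ t.leaves ∧ c.length = N ∧
      (∀ p ∈ c, p.1 ∈ S ∧ p.2 ∈ S ∧ R p.1 b) ∧
      ∀ h p c', c = h ++ p :: c' → color h p.1 = color h p.2 := by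
  induction ht generalizing color with
  | leaf => exact ⟨[], _, .leaf _ _, by simp [leaves], rfl, by simp, by simp⟩
  | node _ _ hr' hts ih =>
    obtain ⟨t', t, hsub, hcolor⟩ :=
      exists_sublist_pair_eq (hr'.symm ▸ hr) fun t => color [] t.root
    have ht : t ∈ _ := hsub.subset (by simp)
    have ht' : t' ∈ _ := hsub.subset (by simp)
    obtain ⟨c, b, hc, hb, hlen, hmem, hmono⟩ :=
      ih t ht fun h => color ((t.root, t'.root) :: h)
    refine ⟨_, b, .node hsub hc, ?_, by rw [List.length_cons, hlen], ?_, ?_⟩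
    · rw [leaves]
      exact List.mem_flatMap.2 ⟨t, ht, hb⟩
    · exact List.forall_mem_cons.2
        ⟨⟨(hts t ht).root_mem, (hts t' ht').root_mem, (hts t ht).rel_root hb⟩, hmem⟩
    · rintro (_ | ⟨q, h⟩) p c' heq
      · obtain ⟨rfl, rfl⟩ := List.cons.inj heq
        exact hcolor.symm
      · obtain ⟨rfl, rfl⟩ := List.cons.inj heq
        exact hmono h p c' rfl

/-- `E` concentrates on good trees of height `N` whose leaves are drawn independently from `D`,
and the sequences of chosen children along their branches are distributed as `tensor Us`. -/
structure IsGenericTree (R : A → B → Prop) (𝒮 : Filter A) (D : Ultrafilter B) (r N : ℕ)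
    (Us : List (Ultrafilter A)) (E : Ultrafilter (LeafTree A B)) : Prop where
  tendsto_root : Tendsto root (E : Filter (LeafTree A B)) 𝒮
  tendsto_leaves : ∃ k, Tendsto leaves (E : Filter (LeafTree A B))
    (tensor (List.replicate k D) : Ultrafilter (List B))
  isGood : ∀ S ∈ 𝒮, ∀ᶠ t in (E : Filter (LeafTree A B)), IsGood R S r N t
  isBranch : ∀ Z ∈ tensor Us, ∀ᶠ t in (E : Filter (LeafTree A B)), ∀ c b,
    IsBranch t c b → c.map Prod.snd ∈ Z

variable {𝒮 : Filter A} {D : Ultrafilter B} {Us : List (Ultrafilter A)}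

theorem exists_isGenericTree_zero (h : ∀ S ∈ 𝒮, ∀ᶠ b in (D : Filter B), ∃ a ∈ S, R a b) :
    ∃ E, IsGenericTree R 𝒮 D r 0 [] E := by
  obtain ⟨W, hfst, hsnd, hR⟩ := exists_ultrafilter_prod h
  refine ⟨W.map fun w : A × B => leaf w.1 w.2, tendsto_map' hfst, ⟨1, tendsto_map' ?_⟩,
    fun S hS => ?_, fun Z hZ => ?_⟩
  · intro s hs
    refine (hsnd.eventually (p := fun b => [b] ∈ s) hs).mono fun w hw => ?_
    rwa [Function.comp_apply, leaves]
  · rw [Ultrafilter.coe_map, eventually_map]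
    exact ((hfst.eventually hS).and hR).mono fun w hw => .leaf hw.1 hw.2
  · rw [Ultrafilter.coe_map, eventually_map]
    refine Eventually.of_forall fun w c b hc => ?_
    cases hc
    exact eventually_tensor_nil.1 hZ

theorem IsGenericTree.exists_succ
    (h : ∀ k, ∀ S ∈ 𝒮, ∀ᶠ l in (tensor (List.replicate k D) : Filter (List B)),
      ∃ a ∈ S, ∀ b ∈ l, R a b) {E : Ultrafilter (LeafTree A B)}
    (hE : IsGenericTree R 𝒮 D r N Us E) :
    ∃ E', IsGenericTree R 𝒮 D r (N + 1) (E.map root :: Us) E' := by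
  obtain ⟨k, hk⟩ := hE.tendsto_leaves
  have hflat := tendsto_flatMap_tensor hk r
  rw [List.flatten_replicate_replicate] at hflat
  obtain ⟨W, hfst, hsnd, hR⟩ := exists_ultrafilter_prod
    fun S hS => hflat.eventually (h (r * k) S hS)
  refine ⟨W.map fun w : A × List (LeafTree A B) => node w.1 w.2, tendsto_map' hfst,
    ⟨r * k, tendsto_map' ((hflat.comp hsnd).congr fun w => by simp [leaves])⟩,
    fun S hS => ?_, fun Z hZ => ?_⟩ <;> rw [Ultrafilter.coe_map, eventually_map]
  · have hgood := hsnd.eventually (eventually_tensor_replicate_forall (hE.isGood S hS) r)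
    have hlen := hsnd.eventually (eventually_length_tensor (List.replicate r E))
    filter_upwards [hfst.eventually hS, hR, hlen, hgood] with w hS hR hlen hgood
    exact .node hS (by rwa [leaves]) (by rwa [List.length_replicate] at hlen) hgood
  · have hpair : ∀ᶠ t' in (E : Filter (LeafTree A B)), ∀ᶠ t in (E : Filter (LeafTree A B)),
        ∀ c b, IsBranch t c b → t'.root :: c.map Prod.snd ∈ Z :=
      (eventually_tensor_cons.1 hZ).mono fun t' => hE.isBranch _
    filter_upwards [hsnd.eventually (eventually_tensor_replicate_pairwise hpair r)]
      with w hw c b hc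
    obtain _ | ⟨hsub, hc⟩ := hc
    exact List.pairwise_iff_forall_sublist.1 hw hsub _ _ hc

theorem exists_isGenericTree
    (h : ∀ k, ∀ S ∈ 𝒮, ∀ᶠ l in (tensor (List.replicate k D) : Filter (List B)),
      ∃ a ∈ S, ∀ b ∈ l, R a b) (r N : ℕ) :
    ∃ Us E, IsGenericTree R 𝒮 D r N Us E ∧ Us.length = N ∧ ∀ U ∈ Us, (U : Filter A) ≤ 𝒮 := by
  induction N with
  | zero =>
    obtain ⟨E, hE⟩ := exists_isGenericTree_zero (R := R) (𝒮 := 𝒮) (D := D) (r := r) fun S hS => by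
      simpa [eventually_tensor_nil] using eventually_tensor_cons.1 (h 1 S hS)
    exact ⟨[], E, hE, rfl, by simp⟩
  | succ N ih =>
    obtain ⟨Us, E, hE, hlen, hUs⟩ := ih
    obtain ⟨E', hE'⟩ := hE.exists_succ h
    exact ⟨_, E', hE', by rw [List.length_cons, hlen],
      List.forall_mem_cons.2 ⟨hE.tendsto_root, hUs⟩⟩

theorem exists_monochromatic_pairs
    (h : ∀ k, ∀ S ∈ 𝒮, ∀ᶠ l in (tensor (List.replicate k D) : Filter (List B)),
      ∃ a ∈ S, ∀ b ∈ l, R a b)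
    {Q : Type*} [Finite Q] (color : List (A × A) → A → Q) (N : ℕ) (hS : S ∈ 𝒮) {Z : Set (List A)}
    (hZ : ∀ Us : List (Ultrafilter A), Us.length = N → (∀ U ∈ Us, (U : Filter A) ≤ 𝒮) →
      Z ∈ tensor Us) :
    ∃ (c : List (A × A)) (b : B), c.length = N ∧ (∀ p ∈ c, p.1 ∈ S ∧ p.2 ∈ S ∧ R p.1 b) ∧
      c.map Prod.snd ∈ Z ∧ ∀ h p c', c = h ++ p :: c' → color h p.1 = color h p.2 := by
  obtain ⟨Us, E, hE, hlen, hUs⟩ := exists_isGenericTree h (Nat.card Q + 1) N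
  obtain ⟨t, ht, hbranch⟩ := ((hE.isGood S hS).and (hE.isBranch Z (hZ Us hlen hUs))).exists
  obtain ⟨c, b, hc, -, hclen, hmem, hmono⟩ :=
    ht.exists_isBranch_monochromatic (Nat.lt_succ_self _) color
  exact ⟨c, b, hclen, hmem, hbranch c b hc, hmono⟩

end LeafTree

end Trees

section PathArrays

open Set Filter

variable {L : FirstOrder.Language.{u, v}} {𝕄 : Type w} [L.Structure 𝕄] {A : Set 𝕄}
variable {ι ν : Type}

/-- The two-column array in `𝕄` with a given list of rows from `A`. -/
def pairArray [Inhabited A] (c : List ((ν → A) × (ν → A))) (q : ℕ × Bool) : ν → 𝕄 :=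
  Subtype.val ∘ bif q.2 then (c.getD q.1 default).2 else (c.getD q.1 default).1

theorem column_pairArray [Inhabited A] (c : List ((ν → A) × (ν → A))) :
    column (pairArray c) true c.length = (c.map Prod.snd).map (Subtype.val ∘ ·) := by
  refine List.ext_getElem (by simp [column]) fun i hi hi' => ?_
  have hic : i < c.length := by simpa [column] using hi
  simp [column, pairArray, hic]

theorem flat_pairArray_comp_rowIndex [Inhabited A] (h c : List ((ν → A) × (ν → A)))
    (p : (ν → A) × (ν → A)) (ε : Bool) :
    flat (pairArray (h ++ p :: c)) ∘ rowIndex h.length ε =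
      Sum.elim (flat (pairArray h) ∘ Prod.map (Prod.map Fin.val id) id)
        (Subtype.val ∘ bif ε then p.2 else p.1) := by
  refine (Sum.comp_elim _ _ _).trans (congrArg₂ _ (funext fun ⟨⟨j, δ⟩, x⟩ => ?_) ?_)
  · simp [flat, pairArray, List.getElem?_append_left j.2]
  · funext x
    simp [flat, pairArray]

theorem not_consistent_image_of_forall_sublist {Φ : Set (ι ⊕ ν → 𝕄)} {K : ℕ} [Inhabited A]
    {c : List ((ν → A) × (ν → A))}
    (hc : ∀ l : List (ν → A), l.Sublist (c.map Prod.snd) → l.length = K →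
      ¬Consistent Φ {x | x ∈ l.map (Subtype.val ∘ ·)})
    {t : Finset ℕ} (ht : ∀ i ∈ t, i < c.length) (hcard : t.card = K) :
    ¬Consistent Φ (pairArray c '' ((t : Set ℕ) ×ˢ {true})) := by
  obtain ⟨l, hl, hlen, hset⟩ := exists_sublist_column (pairArray c) true ht
  rw [column_pairArray] at hl
  obtain ⟨l', hl', rfl⟩ := List.sublist_map_iff.1 hl
  rw [← hset]
  exact hc l' hl' (by rwa [hcard, List.length_map] at hlen)

variable {a₀ : ν → 𝕄} {Φ : Set (ι ⊕ ν → 𝕄)} {D : Ultrafilter (ι → A)} {K : ℕ}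

theorem exists_array_of_eventually [Inhabited A]
    (hD : ∀ k, ∀ S ∈ traceFilter L A a₀, ∀ᶠ l in (tensor (List.replicate k D) :
      Filter (List (ι → A))), ∃ a ∈ S, ∀ b ∈ l, Sum.elim (Subtype.val ∘ b) (Subtype.val ∘ a) ∈ Φ)
    (hK : ∀ Ds : List (Ultrafilter (ν → A)), Ds.length = K →
      (∀ D ∈ Ds, (D : Filter (ν → A)) ≤ traceFilter L A a₀) →
      ∀ᶠ m in (tensor Ds : Filter (List (ν → A))),
        ¬Consistent Φ {x | x ∈ m.map (Subtype.val ∘ ·)})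
    (N : ℕ) {s : Set (ν → 𝕄)} (hs : s ∈ typeFilter L A a₀)
    (R : Finset (Σ i, Set ((Fin i × Bool) × ν ⊕ ν → 𝕄))) :
    ∃ c : ℕ × Bool → ν → 𝕄, (∀ i < N, ∀ ε, c (i, ε) ∈ s) ∧
      (∀ r ∈ R, r.1 < N → flat c ∘ rowIndex r.1 false ∈ r.2 → flat c ∘ rowIndex r.1 true ∈ r.2) ∧
      (∀ t : Finset ℕ, (∀ i ∈ t, i < N) → t.card = K →
        ¬Consistent Φ (c '' ((t : Set ℕ) ×ˢ {true}))) ∧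
      Consistent Φ (c '' pathIndices 0 0 N) := by
  let color : List ((ν → A) × (ν → A)) → (ν → A) → R → Prop := fun h x r =>
    Sum.elim (flat (pairArray h) ∘ Prod.map (Prod.map Fin.val id) id) (Subtype.val ∘ x) ∈ r.1.2
  obtain ⟨c, b, rfl, hc, hZ, hcolor⟩ :=
    LeafTree.exists_monochromatic_pairs hD color N (preimage_mem_comap hs)
      (Z := {l | ∀ l' : List (ν → A), l'.Sublist l → l'.length = K →
        ¬Consistent Φ {x | x ∈ l'.map (Subtype.val ∘ ·)}})
      fun Us _ hUs => eventually_tensor_forall_sublist fun Us' hUs' hlen =>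
        hK Us' hlen fun U hU => hUs U (hUs'.subset hU)
  refine ⟨pairArray c, fun i hi ε => ?_, fun r hr hi => ?_,
    fun t => not_consistent_image_of_forall_sublist hZ, Subtype.val ∘ b, ?_⟩
  · have hci := hc _ (List.getElem_mem hi)
    cases ε <;> simp only [pairArray, List.getD_eq_getElem _ _ hi]
    exacts [hci.1, hci.2.1]
  · obtain ⟨i, r⟩ := r
    obtain ⟨h, p, c', rfl, rfl⟩ : ∃ h p c', c = h ++ p :: c' ∧ h.length = i :=
      ⟨c.take i, c.get ⟨i, hi⟩, c.drop (i + 1), by simp, by simpa using hi.le⟩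
    rw [flat_pairArray_comp_rowIndex, flat_pairArray_comp_rowIndex]
    exact (congrFun (hcolor h p c' rfl) ⟨_, hr⟩).mp
  · rintro _ ⟨⟨i, ε⟩, ⟨hi, -⟩ | ⟨hi, rfl⟩, rfl⟩
    · exact absurd hi (Nat.not_lt_zero i)
    · have hic : i < c.length := by simpa using hi
      simpa only [pairArray, List.getD_eq_getElem _ _ hic, cond_false] using
        (hc _ (List.getElem_mem hic)).2.2

theorem exists_isPathArray [Nonempty A] [Countable ν] (hsat : CountablySaturatedOver L A)
    (hΦ : A.Definable L Φ)
    (hD : ∀ k, ∀ S ∈ traceFilter L A a₀, ∀ᶠ l in (tensor (List.replicate k D) :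
      Filter (List (ι → A))), ∃ a ∈ S, ∀ b ∈ l, Sum.elim (Subtype.val ∘ b) (Subtype.val ∘ a) ∈ Φ)
    (hK : ∀ Ds : List (Ultrafilter (ν → A)), Ds.length = K →
      (∀ D ∈ Ds, (D : Filter (ν → A)) ≤ traceFilter L A a₀) →
      ∀ᶠ m in (tensor Ds : Filter (List (ν → A))),
        ¬Consistent Φ {x | x ∈ m.map (Subtype.val ∘ ·)})
    (N : ℕ) : ∃ c, IsPathArray L A a₀ Φ K 0 N c := by
  have : Nonempty 𝕄 := Nonempty.map Subtype.val ‹Nonempty A›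
  inhabit (A : Type w)
  choose c hs hR hinc hcons using
    fun q : Finset {s // s ∈ typeFilter L A a₀} × Finset (Σ i, Set ((Fin i × Bool) × ν ⊕ ν → 𝕄)) =>
      exists_array_of_eventually hD hK N (s := ⋂ s ∈ q.1, s.1)
        ((biInter_finset_mem _).2 fun s _ => s.2) q.2
  have hsat' := hsat ∅ countable_empty (Filter.map (fun q => flat (c q)) atTop)
  rw [union_empty] at hsat'
  obtain ⟨v, hv⟩ := hsat'
  have htwin : IsTwinArray L A a₀ N (Function.curry v) := by
    refine hv.isTwinArray (fun i hi ε s hsA has => ?_) fun i hi r _ => ?_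
    · let s' : {s // s ∈ typeFilter L A a₀} := ⟨s, mem_typeFilter_of_definable hsA has⟩
      exact (eventually_ge_atTop ({s'}, ∅)).mono fun q hq =>
        mem_iInter₂.1 (hs q i hi ε) s' (hq.1 (Finset.mem_singleton_self s'))
    · exact (eventually_ge_atTop (∅, {⟨i, r⟩})).mono fun q hq =>
        hR q ⟨i, r⟩ (hq.2 (Finset.mem_singleton_self _)) hi
  refine ⟨Function.curry v, by rwa [zero_add], fun t ht hcard => ?_, ?_⟩
  · exact hv _ (definable_consistent hΦ (t.finite_toSet.prod (finite_singleton true))).compl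
      (eventually_map.2 (Eventually.of_forall fun q => hinc q t (by simpa using ht) hcard))
  · exact hv _ (definable_consistent hΦ (finite_pathIndices 0 0 N))
      (eventually_map.2 (Eventually.of_forall hcons))

end PathArrays

section CoNSOP1

open Set

variable {L : FirstOrder.Language.{u, v}} {𝕄 : Type w} [L.Structure 𝕄] {A : Set 𝕄}

theorem ofFn_prefix_ofFn {α : Type*} (σ : ℕ → α) {i N : ℕ} (h : i ≤ N) :
    (List.ofFn fun j : Fin i => σ j) <+: List.ofFn fun j : Fin N => σ j := by
  have htake : (List.ofFn fun j : Fin i => σ j) = (List.ofFn fun j : Fin N => σ j).take i :=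
    List.ext_getElem (by simp [h]) fun j _ _ => by simp
  exact htake ▸ List.take_prefix _ _

theorem not_coNSOP1_of_tree {nv k r : ℕ} {P : Set (ParamFormula L 𝕄 (Fin nv))}
    {Ψ : Set (Fin k ⊕ Fin r × Fin nv → 𝕄)} (hΨ : A.Definable L Ψ)
    {b : List Bool → Fin r → Fin nv → 𝕄} (hb : ∀ η j, RealizesPType L 𝕄 P (b η j))
    (hcons : ∀ η, Consistent Ψ ((fun η' => flat (b η')) '' {η' | η' <+: η}))
    (hinc : ∀ η₁ η₂, η₁ ++ [false] <+: η₂ →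
      ¬Consistent Ψ {flat (b η₂), flat (b (η₁ ++ [true]))}) :
    ¬CoNSOP1 L 𝕄 A P := by
  obtain ⟨θ, hθ, rfl⟩ := definable_iff_exists_paramFormula.1 hΨ
  refine not_not.2 ⟨k, r, θ, b, hθ, hb, fun σ s => ?_, fun η₁ η₂ h => ?_⟩
  · obtain ⟨y, hy⟩ := hcons (List.ofFn fun j : Fin (s.sup id) => σ j)
    refine ⟨y, fun i hi => (ParamFormula.realize_subst _ _ _).2 ?_⟩
    exact hy _ (mem_image_of_mem _ (ofFn_prefix_ofFn σ (Finset.le_sup (f := id) hi)))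
  · rintro ⟨y, hy, hy'⟩
    refine hinc η₁ η₂ h ⟨y, ?_⟩
    rintro _ (rfl | rfl)
    exacts [(ParamFormula.realize_subst _ _ _).1 hy, (ParamFormula.realize_subst _ _ _).1 hy']

theorem TpEq.exists_elim_comp_eq [Nonempty 𝕄] (hsat : CountablySaturatedOver L A) {ζ ν : Type}
    [Countable ζ] [Countable ν] {z : ζ → 𝕄} {x : ν → 𝕄} {f : ν → A ⊕ ζ}
    (h : TpEq L 𝕄 A (Sum.elim Subtype.val z ∘ f) x) :
    ∃ z', TpEq L 𝕄 A z z' ∧ Sum.elim Subtype.val z' ∘ f = x := by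
  obtain ⟨z', hz'⟩ := h.exists_elim hsat z
  refine ⟨z', hz'.comp Sum.inr, funext fun i => ?_⟩
  have hf : ∀ w : ν ⊕ ζ → 𝕄, Sum.elim Subtype.val w (Sum.map id Sum.inr (f i)) =
      Sum.elim Subtype.val (w ∘ Sum.inr) (f i) := fun w => by cases f i <;> rfl
  refine (hf _).symm.trans ((hz'.elim_comp id).apply_eq (i := Sum.map id Sum.inr (f i))
    (j := Sum.inr (Sum.inl i)) (hf _))

theorem HasSOP1Tree.not_coNSOP1 [Nonempty 𝕄] (hsat : CountablySaturatedOver L A) {nv m k n : ℕ}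
    {P : Set (ParamFormula L 𝕄 (Fin nv))} (hP : ∀ φ ∈ P, φ.ParamsIn A) {a : Fin m → Fin nv → 𝕄}
    (ha : ∀ j, RealizesPType L 𝕄 P (a j)) {f : Fin n → A ⊕ Fin m × Fin nv}
    {Φ : Set (Fin k ⊕ Fin n → 𝕄)} (hΦ : A.Definable L Φ)
    (h : HasSOP1Tree L A (Sum.elim Subtype.val (flat a) ∘ f) Φ) : ¬CoNSOP1 L 𝕄 A P := by
  obtain ⟨Q, _, T, htp, hcons, hinc⟩ := h
  choose W hW hWT using fun η q => (htp η q).exists_elim_comp_eq hsat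
  obtain ⟨r, ⟨e⟩⟩ := Finite.exists_equiv_fin (Q × Fin m)
  let g : Q → Fin n → A ⊕ Fin r × Fin nv := fun q => Sum.map id (Prod.map (e ⟨q, ·⟩) id) ∘ f
  let b : List Bool → Fin r → Fin nv → 𝕄 := fun η j =>
    Function.curry (W η (e.symm j).1) (e.symm j).2
  have hb : ∀ η q, Sum.elim Subtype.val (flat (b η)) ∘ g q = T η q := by
    intro η q
    rw [← hWT, ← Function.comp_assoc, Sum.elim_comp_map]
    congr 2
    ext p
    simp [flat, b]
  let Ψ : Set (Fin k ⊕ Fin r × Fin nv → 𝕄) :=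
    ⋂ q, {v | Sum.elim (v ∘ Sum.inl) (Sum.elim Subtype.val (v ∘ Sum.inr) ∘ g q) ∈ Φ}
  have hΨ : A.Definable L Ψ := by
    refine definable_iInter_of_finite fun q => (congrArg _ (Set.ext fun v => ?_)).mp
      (definable_preimage_elim_comp hΦ (Sum.elim (Sum.inr ∘ Sum.inl) (Sum.map id Sum.inr ∘ g q)))
    simp only [mem_ofPred_eq, Sum.comp_elim, ← Function.comp_assoc, Sum.elim_comp_inr,
      Sum.elim_comp_map, Function.comp_id]
  have hmem : ∀ y η, Sum.elim y (flat (b η)) ∈ Ψ ↔ ∀ x ∈ range (T η), Sum.elim y x ∈ Φ := by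
    intro y η
    simp only [Ψ, mem_iInter, mem_ofPred_eq, Sum.elim_comp_inl, Sum.elim_comp_inr, hb,
      forall_mem_range]
  refine not_coNSOP1_of_tree hΨ (b := b) (fun η j φ hφ => ?_) (fun η => ?_) fun η₁ η₂ hη => ?_
  · exact ((hW η _).comp (Prod.mk (e.symm j).2) φ (hP φ hφ)).1 (ha _ φ hφ)
  · obtain ⟨y, hy⟩ := hcons η
    refine ⟨y, forall_mem_image.2 fun η' hη' => (hmem y η').2 fun x hx => hy x ?_⟩
    exact mem_iUnion₂_of_mem hη' hx
  · rintro ⟨y, hy⟩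
    refine hinc η₁ η₂ hη ⟨y, ?_⟩
    rintro x (hx | hx)
    · exact (hmem y _).1 (hy _ (mem_insert _ _)) x hx
    · exact (hmem y _).1 (hy _ (mem_insert_of_mem _ rfl)) x hx

end CoNSOP1

section Independence

open Set Filter

variable {L : FirstOrder.Language.{u, v}} {𝕄 : Type w} [L.Structure 𝕄] {A B : Set 𝕄}
variable {ξ : Type*} {ι ν : Type}

theorem IndKd.consistent {x : ξ → 𝕄} (h : IndKd L 𝕄 A B x) {U : Ultrafilter (ι → 𝕄)}
    (hU : IsInvariantFilter L A (U : Filter (ι → 𝕄))) {b : ℕ → ι → 𝕄}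
    (hb : IsMorleySequence L A (U : Filter (ι → 𝕄)) b) (hbB : range (b 0) ⊆ B)
    {S : Set (ξ ⊕ ι → 𝕄)} (hS : A.Definable L S) (hx : Sum.elim x (b 0) ∈ S) (t : Finset ℕ) :
    Consistent S (b '' t) := by
  obtain ⟨θ, hθ, rfl⟩ := definable_iff_exists_paramFormula.1 hS
  let f : ι ⊕ θ.Params → A ⊕ ι := Sum.elim Sum.inr fun p => Sum.inl ⟨θ.params p, hθ p⟩
  have hf : ∀ w : ι → 𝕄, Sum.elim Subtype.val w ∘ f = Sum.elim w θ.params := fun w =>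
    Sum.comp_elim _ _ _
  have hMorley : IsInvMorleyOver L 𝕄 A fun i => Sum.elim Subtype.val (b i) ∘ f :=
    isInvMorleyOver_iff.2 ⟨U.map (Sum.elim Subtype.val · ∘ f), hU.map_elim_comp f,
      hb.map_elim_comp f⟩
  have hparams : (θ.subst (b 0)).ParamsIn (A ∪ B) := by
    rintro (i | p)
    exacts [Or.inr (hbB ⟨i, rfl⟩), Or.inl (hθ p)]
  by_contra hcon
  refine h (θ.subst (b 0)) hparams ((θ.realize_subst _ _).2 hx)
    ⟨_, hf (b 0), hMorley, fun hfam => ?_⟩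
  obtain ⟨y, hy⟩ := hfam t
  simp only [hf] at hy
  exact hcon ⟨y, forall_mem_image.2 fun i hi => (θ.realize_subst _ _).1 (hy i hi)⟩

theorem IndKd.eventually_consistent {x : ξ → 𝕄} (h : IndKd L 𝕄 A B x) [Countable ι] [Nonempty A]
    (hsat : CountablySaturatedOver L A) {y : ι → 𝕄} (hy : range y ⊆ B) {D : Ultrafilter (ι → A)}
    (hD : (D : Filter (ι → A)) ≤ traceFilter L A y) {S : Set (ξ ⊕ ι → 𝕄)} (hS : A.Definable L S)
    (hx : Sum.elim x y ∈ S) (k : ℕ) :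
    ∀ᶠ l in (tensor (List.replicate k D) : Filter (List (ι → A))),
      Consistent S {z | z ∈ l.map (Subtype.val ∘ ·)} := by
  have hlim : RealizesLimit L (D.map (Subtype.val ∘ ·) : Filter (ι → 𝕄)) A y :=
    fun s hs hev => by_contra fun hys =>
      have ⟨_, hz, hz'⟩ := (Eventually.and hev (hD (eventually_traceFilter hs.compl hys))).exists
      hz' hz
  obtain ⟨b, rfl, hb⟩ := exists_isMorleySequence hsat (U := D.map (Subtype.val ∘ ·)) hlim
  have hl := hb.isGenericList k
  rw [← List.map_replicate] at hl
  rw [← hl.consistent_iff_eventually hS]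
  refine (h.consistent (isInvariantFilter_map_val (D : Filter (ι → A))) hb hy hS hx
    (Finset.range k)).mono ?_
  intro z hz
  simpa using hz

theorem IndKd.eventually_exists_mem {M : L.ElementarySubstructure 𝕄} {x : ξ → 𝕄}
    (h : IndKd L 𝕄 (M : Set 𝕄) B x) [Countable ι] [Finite ν] [Nonempty (M : Set 𝕄)]
    (hsat : CountablySaturatedOver L (M : Set 𝕄)) {y : ι → 𝕄} (hy : range y ⊆ B)
    {D : Ultrafilter (ι → (M : Set 𝕄))}
    (hD : (D : Filter (ι → (M : Set 𝕄))) ≤ traceFilter L (M : Set 𝕄) y)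
    {f : ν → (M : Set 𝕄) ⊕ ξ} {Φ : Set (ι ⊕ ν → 𝕄)} (hΦ : (M : Set 𝕄).Definable L Φ)
    (hx : Sum.elim y (Sum.elim Subtype.val x ∘ f) ∈ Φ) (k : ℕ) {S : Set (ν → (M : Set 𝕄))}
    (hS : S ∈ traceFilter L (M : Set 𝕄) (Sum.elim Subtype.val x ∘ f)) :
    ∀ᶠ l in (tensor (List.replicate k D) : Filter (List (ι → (M : Set 𝕄)))),
      ∃ a ∈ S, ∀ b ∈ l, Sum.elim (Subtype.val ∘ b) (Subtype.val ∘ a) ∈ Φ := by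
  classical
  obtain ⟨t, ⟨s, hs, hxs, hst⟩, htS⟩ := hS
  let Ψ : Set (ι ⊕ ν → 𝕄) := {v | v ∘ Sum.inr ∈ s} ∩ Φ
  let f' : ι ⊕ ν → (M : Set 𝕄) ⊕ (ξ ⊕ ι) := Sum.elim (Sum.inr ∘ Sum.inr) (Sum.map id Sum.inl ∘ f)
  have hf' : ∀ (x : ξ → 𝕄) (z : ι → 𝕄), Sum.elim Subtype.val (Sum.elim x z) ∘ f' =
      Sum.elim z (Sum.elim Subtype.val x ∘ f) := fun x z => by
    rw [Sum.comp_elim, ← Function.comp_assoc, ← Function.comp_assoc, Sum.elim_comp_map]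
    rfl
  have hΨ : (M : Set 𝕄).Definable L Ψ := (hs.preimage_comp Sum.inr).inter hΦ
  have hev := h.eventually_consistent hsat hy hD (definable_preimage_elim_comp hΨ f')
    (by rw [mem_ofPred_eq, hf']; exact ⟨hxs, hx⟩) k
  filter_upwards [hev] with l ⟨x', hx'⟩
  simp only [mem_ofPred_eq, hf', List.mem_map, forall_exists_index, and_imp,
    forall_apply_eq_imp_iff₂] at hx'
  have hne : (s ∩ ⋂ z ∈ l.toFinset, {v | Sum.elim (Subtype.val ∘ z) v ∈ Φ}).Nonempty := by
    rcases l.eq_nil_or_concat with rfl | ⟨l, z, rfl⟩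
    · exact ⟨_, hxs, by simp⟩
    · exact ⟨_, (hx' z (by simp)).1, mem_iInter₂.2 fun z hz => (hx' z (List.mem_toFinset.1 hz)).2⟩
  have hdef : (M : Set 𝕄).Definable L
      (s ∩ ⋂ z ∈ l.toFinset, {v | Sum.elim (Subtype.val ∘ z) v ∈ Φ}) :=
    hs.inter <| definable_biInter_finset (fun z => definable_fiber hΦ subset_rfl <|
      range_subset_iff.2 fun i => (z i).2) _
  obtain ⟨a, has, ha⟩ := exists_mem_of_definable hdef hne
  exact ⟨a, htS (hst has), fun b hb => mem_iInter₂.1 ha b (List.mem_toFinset.2 hb)⟩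

end Independence

section Symmetry

open Set Filter

variable {L : FirstOrder.Language.{u, v}} {𝕄 : Type w} [L.Structure 𝕄] {A B : Set 𝕄}

theorem not_kimDividesOver_of_subsingleton [Subsingleton 𝕄] {δ : Type*} {φ : ParamFormula L 𝕄 δ}
    {b : δ → 𝕄} (hb : φ.Realize b) : ¬φ.KimDividesOver A := by
  rintro ⟨c, hc₀, -, hincons⟩
  refine hincons fun t => ⟨b, fun i _ => ?_⟩
  change φ.toFormula.Realize (Sum.elim b (c i))
  rwa [Subsingleton.elim (c i) (c 0), hc₀]

theorem ParamFormula.KimDividesOver.exists_not_consistent [Nonempty A] {δ ξ : Type*}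
    {φ : ParamFormula L 𝕄 δ} (hdiv : φ.KimDividesOver A) {x : ξ → 𝕄}
    (hφ : φ.ParamsIn (A ∪ range x)) {b : δ → 𝕄} (hb : φ.Realize b) :
    ∃ (k n : ℕ) (g : Fin k → δ) (f : Fin n → A ⊕ ξ) (Φ : Set (Fin k ⊕ Fin n → 𝕄))
      (U : Ultrafilter (Fin n → 𝕄)) (K : ℕ), A.Definable L Φ ∧
      Sum.elim (b ∘ g) (Sum.elim Subtype.val x ∘ f) ∈ Φ ∧
      IsInvariantFilter L A (U : Filter (Fin n → 𝕄)) ∧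
      (U : Filter (Fin n → 𝕄)) ≤ typeFilter L A (Sum.elim Subtype.val x ∘ f) ∧
      ∀ l, IsGenericList L A (List.replicate K U) l → ¬Consistent Φ {z | z ∈ l} := by
  obtain ⟨c, hc₀, hc, hincons⟩ := hdiv
  obtain ⟨V, hV, hVc⟩ := isInvMorleyOver_iff.1 hc
  have hs : A.Definable L {v : δ ⊕ φ.Params → 𝕄 | φ.toFormula.Realize v} :=
    (empty_definable_iff.2 ⟨φ.toFormula, rfl⟩ : (∅ : Set 𝕄).Definable L _).mono (empty_subset A)
  obtain ⟨k, n, g, g', Φ, hg, hΦ, hφΦ⟩ := exists_finite_support hs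
  have hname : ∀ p, ∃ t, Sum.elim Subtype.val x t = φ.params (g' p) := fun p => by
    rcases hφ (g' p) with hp | ⟨i, hi⟩
    exacts [⟨Sum.inl ⟨_, hp⟩, rfl⟩, ⟨Sum.inr i, hi⟩]
  choose f hf using hname
  have hf : Sum.elim Subtype.val x ∘ f = φ.params ∘ g' := funext hf
  have hU := hV.map_elim_comp (Sum.inr ∘ g')
  have hUc := hVc.map_elim_comp (Sum.inr ∘ g')
  rw [FamConsistent, not_forall] at hincons
  obtain ⟨t, ht⟩ := hincons
  refine ⟨k, n, g, f, Φ, V.map (Sum.elim Subtype.val · ∘ Sum.inr ∘ g'), t.sup id + 1, hΦ, ?_, hU,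
    ?_, fun l hl hcons => ?_⟩
  · rw [hf]
    exact (hφΦ _ _).1 hb
  · rw [hf, ← hc₀]
    exact ((hUc 0).mono subset_union_left).le_typeFilter
  · obtain ⟨y, hy⟩ := (hl.consistent_iff hΦ (hUc.isGenericList _)
      fun W hW => List.eq_of_mem_replicate hW ▸ hU).1 hcons
    refine ht ⟨Function.extend g y b, fun i hi => (hφΦ _ _).2 ?_⟩
    have hi : i < t.sup id + 1 := Nat.lt_succ_of_le (Finset.le_sup (f := id) hi)
    rw [Function.extend_comp hg]
    exact hy _ (List.mem_map.2 ⟨i, by simpa using hi, rfl⟩)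

theorem IndKd.hasSOP1Tree {M : L.ElementarySubstructure 𝕄} {ξ : Type*} {ι ν : Type} [Finite ι]
    [Finite ν] [Nonempty (M : Set 𝕄)] (hsat : CountablySaturatedOver L (M : Set 𝕄)) {x : ξ → 𝕄}
    (h : IndKd L 𝕄 (M : Set 𝕄) B x) {y : ι → 𝕄} (hy : range y ⊆ B) {f : ν → (M : Set 𝕄) ⊕ ξ}
    {Φ : Set (ι ⊕ ν → 𝕄)} (hΦ : (M : Set 𝕄).Definable L Φ)
    (hx : Sum.elim y (Sum.elim Subtype.val x ∘ f) ∈ Φ) {U : Ultrafilter (ν → 𝕄)}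
    (hU : IsInvariantFilter L (M : Set 𝕄) (U : Filter (ν → 𝕄)))
    (hUx : (U : Filter (ν → 𝕄)) ≤ typeFilter L (M : Set 𝕄) (Sum.elim Subtype.val x ∘ f)) {K : ℕ}
    (hK : ∀ l, IsGenericList L (M : Set 𝕄) (List.replicate K U) l → ¬Consistent Φ {z | z ∈ l}) :
    HasSOP1Tree L (M : Set 𝕄) (Sum.elim Subtype.val x ∘ f) Φ := by
  have : Nonempty 𝕄 := Nonempty.map Subtype.val ‹Nonempty (M : Set 𝕄)›
  have : (traceFilter L (M : Set 𝕄) y).NeBot := neBot_traceFilter M y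
  by_contra htree
  obtain ⟨K', hK'⟩ := exists_forall_eventually_not_consistent hsat hΦ htree hU hUx hK
  exact htree (hasSOP1Tree_of_isPathArray hsat hΦ (exists_isPathArray hsat hΦ
    (fun k _ => h.eventually_exists_mem hsat hy (Ultrafilter.of_le _) hΦ hx k) hK'))

theorem exists_factor_fin {n : ℕ} {X J K : Type*} (f : Fin n → X ⊕ J × K) :
    ∃ (m : ℕ) (j : Fin m → J) (f' : Fin n → X ⊕ Fin m × K),
      Sum.map id (Prod.map j id) ∘ f' = f := by
  rcases isEmpty_or_nonempty J with _ | ⟨⟨j₀⟩⟩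
  · refine ⟨0, isEmptyElim, fun p => (f p).map id fun q => isEmptyElim q.1, funext fun p => ?_⟩
    rcases hp : f p with x | ⟨i, -⟩
    · simp [hp]
    · exact isEmptyElim i
  · refine ⟨n, fun p => (f p).elim (fun _ => j₀) Prod.fst,
      fun p => (f p).map id fun q => (p, q.2), funext fun p => ?_⟩
    rcases hp : f p with x | q <;> simp [hp]

theorem statement_5_general {M : L.ElementarySubstructure 𝕄}
    (hsat : CountablySaturatedOver L (M : Set 𝕄)) {nv : ℕ} {P : Set (ParamFormula L 𝕄 (Fin nv))}
    (hP : ∀ φ ∈ P, φ.ParamsIn (M : Set 𝕄)) (hco : CoNSOP1 L 𝕄 (M : Set 𝕄) P) {J δ : Type*}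
    {a : J → Fin nv → 𝕄} (ha : ∀ j, RealizesPType L 𝕄 P (a j)) {b : δ → 𝕄}
    (h : IndKd L 𝕄 (M : Set 𝕄) (range b) (flat a)) :
    IndKd L 𝕄 (M : Set 𝕄) (range (flat a)) b := by
  intro φ hφ hb hdiv
  rcases isEmpty_or_nonempty 𝕄 with _ | _
  · exact not_kimDividesOver_of_subsingleton hb hdiv
  have : Nonempty (M : Set 𝕄) := inferInstanceAs (Nonempty M)
  obtain ⟨k, n, g, f, Φ, U, K, hΦ, hbΦ, hU, hUa, hK⟩ := hdiv.exists_not_consistent hφ hb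
  have htree := h.hasSOP1Tree hsat (range_comp_subset_range g b) hΦ hbΦ hU hUa hK
  obtain ⟨m, j, f', rfl⟩ := exists_factor_fin f
  rw [← Function.comp_assoc, Sum.elim_comp_map] at htree
  exact htree.not_coNSOP1 (a := a ∘ j) hsat hP (fun i => ha (j i)) hΦ hco

end Symmetry

/-- symmetry of Kim-dividing independence for tuples of realizations of
a co-NSOP₁ type. -/
theorem statement_5
    (L : FirstOrder.Language.{u, v}) (𝕄 : Type w) [L.Structure 𝕄]
    (κ : Cardinal.{w}) [IsMonster L 𝕄 κ]
    (M : L.ElementarySubstructure 𝕄) (hMsmall : Cardinal.mk ↥(M : Set 𝕄) < κ)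
    {nv : ℕ} (P : Set (ParamFormula L 𝕄 (Fin nv)))
    (hP : ∀ φ ∈ P, φ.ParamsIn (M : Set 𝕄))
    (hco : CoNSOP1 L 𝕄 (M : Set 𝕄) P)
    {m : ℕ} (a : Fin m → Fin nv → 𝕄) (ha : ∀ j, RealizesPType L 𝕄 P (a j))
    {δ : Type w} (b : δ → 𝕄)
    (h : IndKd L 𝕄 (M : Set 𝕄) (Set.range b) (flat a)) :
    IndKd L 𝕄 (M : Set 𝕄) (Set.range (flat a)) b :=
  statement_5_general (countablySaturatedOver_of_isMonster κ hMsmall) hP hco ha h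

end NSOP3Paper
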